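/- arXiv:1109.4774 — 2 statements merged into one kernel-verified Lean document; each statement's English description precedes it below -/
import Mathlib

section
/- Let V be a seven-dimensional real vector space, let e₁,…,e₇ be a basis of V with dual basis e¹,…,e⁷, and let Ψ := e^{1234}−e^{1256}−e^{3456}−e^{2467}+e^{2357}+e^{1457}+e^{1367} ∈ Λ⁴V* (the Hodge dual of a G₂*-structure for which e₁,…,e₇ is an adapted basis). Let vol := e^{1234567}, let X ∈ Λ⁷V be the seven-vector with vol(X) = 1, set Z := Ψ ⌟ X ∈ Λ³V, and define the symmetric bilinear form g on V* by 6·g(β,γ)·X = (β ⌟ Z)∧(γ ⌟ Z)∧Z for β,γ ∈ V*. Then for every nonzero α ∈ V* and every complement U of span(α) in V*, the unique forms Ω ∈ Λ⁴U and ρ ∈ Λ³U with Ψ = Ω + ρ∧α satisfy: l(Ω) = 2 if and only if g(α,α) = 0. -/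
open Module

section Machinery

variable {F : Type*} [Field F] {M : Type*} [AddCommGroup M] [Module F M]

/-- `X` is a decomposable `k`-vector, with factors taken from the ambient subspace `A`. -/
def Dec (A : Submodule F M) (k : ℕ) (X : ExteriorAlgebra F M) : Prop :=
  ∃ v : Fin k → M, (∀ i, v i ∈ A) ∧ X = (List.ofFn fun i => ExteriorAlgebra.ι F (v i)).prod

/-- `X` is a sum of `l` decomposable `k`-vectors with factors from `A`. -/
def LenLE (A : Submodule F M) (k l : ℕ) (X : ExteriorAlgebra F M) : Prop :=
  ∃ Y : Fin l → ExteriorAlgebra F M, (∀ i, Dec A k (Y i)) ∧ X = ∑ i, Y i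

/-- `X` has (irreducible) length `l` as a `k`-vector: it is a sum of `l` decomposable
`k`-vectors, and of no smaller number of them. -/
def HasLen (A : Submodule F M) (k l : ℕ) (X : ExteriorAlgebra F M) : Prop :=
  LenLE A k l X ∧ ∀ j < l, ¬ LenLE A k j X

/-- The (irreducible) length of the `k`-vector `X`. -/
noncomputable def len (A : Submodule F M) (k : ℕ) (X : ExteriorAlgebra F M) : ℕ :=
  sInf {l | LenLE A k l X}

/-- `X` belongs to `Λ^k W`, regarded as a subspace of the exterior algebra. -/
def memPow (W : Submodule F M) (k : ℕ) (X : ExteriorAlgebra F M) : Prop :=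
  X ∈ (W.map (ExteriorAlgebra.ι F)) ^ k

/-- The support `[X]` of the `k`-vector `X`: the intersection of all subspaces `W`
with `X ∈ Λ^k W`. -/
noncomputable def supp (k : ℕ) (X : ExteriorAlgebra F M) : Submodule F M :=
  sInf {W | memPow W k X}

/-- The rank `ρ(X) = dim [X]` of the `k`-vector `X`. -/
noncomputable def rkInv (k : ℕ) (X : ExteriorAlgebra F M) : ℕ :=
  Module.finrank F (supp k X)

/-- `(v, W, X₁, X₂)` is an admissible splitting `X = X₁ ∧ v + X₂` of the `k`-vector `X`:
`v ∈ [X] ∖ {0}`, `W` is a complement of `span v` in `[X]`, `X₁ ∈ Λ^(k-1) W` and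
`X₂ ∈ Λ^k W`. -/
def Split (k : ℕ) (X : ExteriorAlgebra F M) (v : M) (W : Submodule F M)
    (X₁ X₂ : ExteriorAlgebra F M) : Prop :=
  v ∈ supp k X ∧ v ≠ 0 ∧
    W ⊔ Submodule.span F {v} = supp k X ∧ W ⊓ Submodule.span F {v} = ⊥ ∧
    memPow W (k - 1) X₁ ∧ memPow W k X₂ ∧
    X = X₁ * ExteriorAlgebra.ι F v + X₂

/-- The invariant `m(X) = min { l(X₁) }` over all admissible splittings of `X`. -/
noncomputable def mInv (A : Submodule F M) (k : ℕ) (X : ExteriorAlgebra F M) : ℕ :=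
  sInf {l | ∃ v W X₁ X₂, Split k X v W X₁ X₂ ∧ HasLen A (k - 1) l X₁}

/-- The invariant `r(X) = min { l(X₂) }` over all admissible splittings of `X`. -/
noncomputable def rInv (A : Submodule F M) (k : ℕ) (X : ExteriorAlgebra F M) : ℕ :=
  sInf {l | ∃ v W X₁ X₂, Split k X v W X₁ X₂ ∧ HasLen A k l X₂}

end Machinery

section Contraction

variable {V : Type*} [AddCommGroup V] [Module ℝ V]

/-- Interior product (contraction) of an element of the exterior algebra of `V`
with a covector `β ∈ V*`. -/
noncomputable def ctr1 (β : Module.Dual ℝ V) (Y : ExteriorAlgebra ℝ V) :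
    ExteriorAlgebra ℝ V :=
  CliffordAlgebra.contractLeft (Q := 0) β Y

/-- Contraction `(β₁ ∧ β₂ ∧ β₃ ∧ β₄) ⌟ Y` of `Y` with a decomposable four-form, pairing
the four-form against the first four slots of `Y`. -/
noncomputable def ctr4 (β₁ β₂ β₃ β₄ : Module.Dual ℝ V) (Y : ExteriorAlgebra ℝ V) :
    ExteriorAlgebra ℝ V :=
  ctr1 β₄ (ctr1 β₃ (ctr1 β₂ (ctr1 β₁ Y)))

/-- The wedge product `b i ∧ b j ∧ b k ∧ b l` of four covectors. -/
noncomputable def wedge4 (b : Fin 7 → Module.Dual ℝ V) (i j k l : Fin 7) :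
    ExteriorAlgebra ℝ (Module.Dual ℝ V) :=
  ExteriorAlgebra.ι ℝ (b i) * ExteriorAlgebra.ι ℝ (b j) *
    ExteriorAlgebra.ι ℝ (b k) * ExteriorAlgebra.ι ℝ (b l)

/-- The four-form `Ψ = e^{1234}-e^{1256}-e^{3456}-e^{2467}+e^{2357}+e^{1457}+e^{1367}`
(the Hodge dual of a `G₂*`-structure), with `0`-based indices. -/
noncomputable def PsiMinus (e : Fin 7 → Module.Dual ℝ V) :
    ExteriorAlgebra ℝ (Module.Dual ℝ V) :=
  wedge4 e 0 1 2 3 - wedge4 e 0 1 4 5 - wedge4 e 2 3 4 5 - wedge4 e 1 3 5 6 +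
    wedge4 e 1 2 4 6 + wedge4 e 0 3 4 6 + wedge4 e 0 2 5 6

/-- The contraction `Ψ ⌟ X` of a seven-vector `X` with the `G₂*`-form `Ψ` built from the
dual basis `e`, pairing each four-form term against the first four slots of `X`. -/
noncomputable def Zctr (e : Fin 7 → Module.Dual ℝ V) (X : ExteriorAlgebra ℝ V) :
    ExteriorAlgebra ℝ V :=
  ctr4 (e 0) (e 1) (e 2) (e 3) X - ctr4 (e 0) (e 1) (e 4) (e 5) X -
    ctr4 (e 2) (e 3) (e 4) (e 5) X - ctr4 (e 1) (e 3) (e 5) (e 6) X +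
    ctr4 (e 1) (e 2) (e 4) (e 6) X + ctr4 (e 0) (e 3) (e 4) (e 6) X +
    ctr4 (e 0) (e 2) (e 5) (e 6) X

end Contraction



section Aux

theorem ysw' {A : Type*} [Ring A] {y : Fin 7 → A} (sw : ∀ i j, j < i → y i * y j = -(y j * y i))
    (i j : Fin 7) (h : j < i) (w : A) : y i * (y j * w) = -(y j * (y i * w)) := by
  rw [← mul_assoc, sw i j h, neg_mul, mul_assoc]

theorem ysq' {A : Type*} [Ring A] {y : Fin 7 → A} (sq : ∀ i, y i * y i = 0)
    (i : Fin 7) (w : A) : y i * (y i * w) = 0 := by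
  rw [← mul_assoc, sq i, zero_mul]

theorem iota_sw {M : Type*} [AddCommGroup M] [Module ℝ M] (e : Fin 7 → M) (i j : Fin 7) (_ : j < i) :
    ExteriorAlgebra.ι ℝ (e i) * ExteriorAlgebra.ι ℝ (e j) =
      -(ExteriorAlgebra.ι ℝ (e j) * ExteriorAlgebra.ι ℝ (e i)) :=
  eq_neg_of_add_eq_zero_left (ExteriorAlgebra.ι_add_mul_swap _ _)

/-- the four-form in an abstract algebra -/
def PsiA {A : Type*} [Ring A] (y : Fin 7 → A) : A :=
  y 0 * y 1 * y 2 * y 3 - y 0 * y 1 * y 4 * y 5 - y 2 * y 3 * y 4 * y 5 - y 1 * y 3 * y 5 * y 6 +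
    y 1 * y 2 * y 4 * y 6 + y 0 * y 3 * y 4 * y 6 + y 0 * y 2 * y 5 * y 6

def volA {A : Type*} [Ring A] (y : Fin 7 → A) : A :=
  y 0 * (y 1 * (y 2 * (y 3 * (y 4 * (y 5 * y 6)))))

theorem rot01 {A : Type*} [Ring A] [Algebra ℝ A] (y : Fin 7 → A)
    (sw : ∀ i j, j < i → y i * y j = -(y j * y i)) (sq : ∀ i, y i * y i = 0)
    (c s : ℝ) (h : c ^ 2 + s ^ 2 = 1) :
    PsiA ![c • y 0 + s • y 1, -s • y 0 + c • y 1, y 2, y 3, c • y 4 + -s • y 5, s • y 4 + c • y 5, y 6] = PsiA y ∧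
    volA ![c • y 0 + s • y 1, -s • y 0 + c • y 1, y 2, y 3, c • y 4 + -s • y 5, s • y 4 + c • y 5, y 6] = volA y := by
  constructor
  all_goals
    simp [PsiA, volA, mul_add, add_mul, mul_assoc, sw, sq, ysw' sw, ysq' sq]
    match_scalars <;> first | ring1 | linear_combination h | linear_combination -h |
      linear_combination (c ^ 2 + s ^ 2 + 1) * h | linear_combination -(c ^ 2 + s ^ 2 + 1) * h

theorem rot02 {A : Type*} [Ring A] [Algebra ℝ A] (y : Fin 7 → A)
    (sw : ∀ i j, j < i → y i * y j = -(y j * y i)) (sq : ∀ i, y i * y i = 0)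
    (c s : ℝ) (h : c ^ 2 + s ^ 2 = 1) :
    PsiA ![c • y 0 + s • y 2, y 1, -s • y 0 + c • y 2, y 3, y 4, c • y 5 + s • y 6, -s • y 5 + c • y 6] = PsiA y ∧
    volA ![c • y 0 + s • y 2, y 1, -s • y 0 + c • y 2, y 3, y 4, c • y 5 + s • y 6, -s • y 5 + c • y 6] = volA y := by
  constructor
  all_goals
    simp [PsiA, volA, mul_add, add_mul, mul_assoc, sw, sq, ysw' sw, ysq' sq]
    match_scalars <;> first | ring1 | linear_combination h | linear_combination -h |
      linear_combination (c ^ 2 + s ^ 2 + 1) * h | linear_combination -(c ^ 2 + s ^ 2 + 1) * h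

theorem rot03 {A : Type*} [Ring A] [Algebra ℝ A] (y : Fin 7 → A)
    (sw : ∀ i j, j < i → y i * y j = -(y j * y i)) (sq : ∀ i, y i * y i = 0)
    (c s : ℝ) (h : c ^ 2 + s ^ 2 = 1) :
    PsiA ![c • y 0 + s • y 3, y 1, y 2, -s • y 0 + c • y 3, c • y 4 + s • y 6, y 5, -s • y 4 + c • y 6] = PsiA y ∧
    volA ![c • y 0 + s • y 3, y 1, y 2, -s • y 0 + c • y 3, c • y 4 + s • y 6, y 5, -s • y 4 + c • y 6] = volA y := by
  constructor
  all_goals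
    simp [PsiA, volA, mul_add, add_mul, mul_assoc, sw, sq, ysw' sw, ysq' sq]
    match_scalars <;> first | ring1 | linear_combination h | linear_combination -h |
      linear_combination (c ^ 2 + s ^ 2 + 1) * h | linear_combination -(c ^ 2 + s ^ 2 + 1) * h

theorem rot23 {A : Type*} [Ring A] [Algebra ℝ A] (y : Fin 7 → A)
    (sw : ∀ i j, j < i → y i * y j = -(y j * y i)) (sq : ∀ i, y i * y i = 0)
    (c s : ℝ) (h : c ^ 2 + s ^ 2 = 1) :
    PsiA ![y 0, y 1, c • y 2 + s • y 3, -s • y 2 + c • y 3, c • y 4 + -s • y 5, s • y 4 + c • y 5, y 6] = PsiA y ∧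
    volA ![y 0, y 1, c • y 2 + s • y 3, -s • y 2 + c • y 3, c • y 4 + -s • y 5, s • y 4 + c • y 5, y 6] = volA y := by
  constructor
  all_goals
    simp [PsiA, volA, mul_add, add_mul, mul_assoc, sw, sq, ysw' sw, ysq' sq]
    match_scalars <;> first | ring1 | linear_combination h | linear_combination -h |
      linear_combination (c ^ 2 + s ^ 2 + 1) * h | linear_combination -(c ^ 2 + s ^ 2 + 1) * h

theorem rot12 {A : Type*} [Ring A] [Algebra ℝ A] (y : Fin 7 → A)
    (sw : ∀ i j, j < i → y i * y j = -(y j * y i)) (sq : ∀ i, y i * y i = 0)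
    (c s : ℝ) (h : c ^ 2 + s ^ 2 = 1) :
    PsiA ![y 0, c • y 1 + s • y 2, -s • y 1 + c • y 2, y 3, c • y 4 + s • y 6, y 5, -s • y 4 + c • y 6] = PsiA y ∧
    volA ![y 0, c • y 1 + s • y 2, -s • y 1 + c • y 2, y 3, c • y 4 + s • y 6, y 5, -s • y 4 + c • y 6] = volA y := by
  constructor
  all_goals
    simp [PsiA, volA, mul_add, add_mul, mul_assoc, sw, sq, ysw' sw, ysq' sq]
    match_scalars <;> first | ring1 | linear_combination h | linear_combination -h |
      linear_combination (c ^ 2 + s ^ 2 + 1) * h | linear_combination -(c ^ 2 + s ^ 2 + 1) * h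

end Aux


section Frame

theorem givens (p q : ℝ) : ∃ c s : ℝ, c ^ 2 + s ^ 2 = 1 ∧ -s * p + c * q = 0 := by
  by_cases h : p ^ 2 + q ^ 2 = 0
  · have hp : p = 0 := by nlinarith [sq_nonneg p, sq_nonneg q]
    have hq : q = 0 := by nlinarith [sq_nonneg p, sq_nonneg q]
    exact ⟨1, 0, by norm_num, by simp [hq]⟩
  · have hpos : 0 < p ^ 2 + q ^ 2 := lt_of_le_of_ne (by positivity) (Ne.symm h)
    have hs : Real.sqrt (p ^ 2 + q ^ 2) ^ 2 = p ^ 2 + q ^ 2 := Real.sq_sqrt hpos.le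
    have hne : Real.sqrt (p ^ 2 + q ^ 2) ≠ 0 := (Real.sqrt_pos.mpr hpos).ne'
    refine ⟨p / Real.sqrt (p ^ 2 + q ^ 2), q / Real.sqrt (p ^ 2 + q ^ 2), ?_, ?_⟩
    · rw [div_pow, div_pow, hs]; field_simp
    · field_simp; ring

/-- `f` is a frame with the same four-form and volume as `e`. -/
def SameFr {M : Type*} [AddCommGroup M] [Module ℝ M] (e f : Fin 7 → M) : Prop :=
  PsiA (fun i => ExteriorAlgebra.ι ℝ (f i)) = PsiA (fun i => ExteriorAlgebra.ι ℝ (e i)) ∧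
  volA (fun i => ExteriorAlgebra.ι ℝ (f i)) = volA (fun i => ExteriorAlgebra.ι ℝ (e i))

/-- coordinates of `α` -/
def Co {M : Type*} [AddCommGroup M] [Module ℝ M] (e : Fin 7 → M) (α : M)
    (a0 a1 a2 a3 a4 a5 a6 : ℝ) : Prop :=
  α = a0 • e 0 + a1 • e 1 + a2 • e 2 + a3 • e 3 + a4 • e 4 + a5 • e 5 + a6 • e 6

theorem step01 {M : Type*} [AddCommGroup M] [Module ℝ M] (e : Fin 7 → M) (α : M)
    (a0 a1 a2 a3 a4 a5 a6 : ℝ) (h : Co e α a0 a1 a2 a3 a4 a5 a6) :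
    ∃ f, SameFr e f ∧ ∃ a0' a2' a3' a4' a5' a6', Co f α a0' 0 a2' a3' a4' a5' a6' := by
  obtain ⟨c, s, hcs, h0⟩ := givens a0 a1
  refine ⟨![c • e 0 + s • e 1, -s • e 0 + c • e 1, e 2, e 3, c • e 4 + -s • e 5, s • e 4 + c • e 5, e 6], ?_, (c * a0 + s * a1), a2, a3, (c * a4 + -s * a5), (s * a4 + c * a5), a6, ?_⟩
  · have := rot01 (fun i => ExteriorAlgebra.ι ℝ (e i)) (fun i j => iota_sw e i j)
      (fun i => ExteriorAlgebra.ι_sq_zero _) c s hcs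
    unfold SameFr
    convert this using 3 <;>
    · funext i
      fin_cases i <;> simp
  · have h1 : (-s * a0 + c * a1) = 0 := by linear_combination h0
    have h2 : Co ![c • e 0 + s • e 1, -s • e 0 + c • e 1, e 2, e 3, c • e 4 + -s • e 5, s • e 4 + c • e 5, e 6] α (c * a0 + s * a1) (-s * a0 + c * a1) a2 a3 (c * a4 + -s * a5) (s * a4 + c * a5) a6 := by
      unfold Co at h ⊢
      rw [h]
      simp only [Fin.isValue, Matrix.cons_val]
      match_scalars <;> first | ring1 | linear_combination a0 * hcs | linear_combination -a0 * hcs | linear_combination a1 * hcs | linear_combination -a1 * hcs | linear_combination a4 * hcs | linear_combination -a4 * hcs | linear_combination a5 * hcs | linear_combination -a5 * hcs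
    rw [h1] at h2
    simpa only [mul_zero, add_zero, zero_add] using h2

theorem step02 {M : Type*} [AddCommGroup M] [Module ℝ M] (e : Fin 7 → M) (α : M)
    (a0 a2 a3 a4 a5 a6 : ℝ) (h : Co e α a0 0 a2 a3 a4 a5 a6) :
    ∃ f, SameFr e f ∧ ∃ a0' a3' a4' a5' a6', Co f α a0' 0 0 a3' a4' a5' a6' := by
  obtain ⟨c, s, hcs, h0⟩ := givens a0 a2
  refine ⟨![c • e 0 + s • e 2, e 1, -s • e 0 + c • e 2, e 3, e 4, c • e 5 + s • e 6, -s • e 5 + c • e 6], ?_, (c * a0 + s * a2), a3, a4, (c * a5 + s * a6), (-s * a5 + c * a6), ?_⟩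
  · have := rot02 (fun i => ExteriorAlgebra.ι ℝ (e i)) (fun i j => iota_sw e i j)
      (fun i => ExteriorAlgebra.ι_sq_zero _) c s hcs
    unfold SameFr
    convert this using 3 <;>
    · funext i
      fin_cases i <;> simp
  · have h1 : (-s * a0 + c * a2) = 0 := by linear_combination h0
    have h2 : Co ![c • e 0 + s • e 2, e 1, -s • e 0 + c • e 2, e 3, e 4, c • e 5 + s • e 6, -s • e 5 + c • e 6] α (c * a0 + s * a2) 0 (-s * a0 + c * a2) a3 a4 (c * a5 + s * a6) (-s * a5 + c * a6) := by
      unfold Co at h ⊢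
      rw [h]
      simp only [Fin.isValue, Matrix.cons_val]
      match_scalars <;> first | ring1 | linear_combination a0 * hcs | linear_combination -a0 * hcs | linear_combination a2 * hcs | linear_combination -a2 * hcs | linear_combination a5 * hcs | linear_combination -a5 * hcs | linear_combination a6 * hcs | linear_combination -a6 * hcs
    rw [h1] at h2
    simpa only [mul_zero, add_zero, zero_add] using h2

theorem step03 {M : Type*} [AddCommGroup M] [Module ℝ M] (e : Fin 7 → M) (α : M)
    (a0 a3 a4 a5 a6 : ℝ) (h : Co e α a0 0 0 a3 a4 a5 a6) :
    ∃ f, SameFr e f ∧ ∃ a0' a4' a5' a6', Co f α a0' 0 0 0 a4' a5' a6' := by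
  obtain ⟨c, s, hcs, h0⟩ := givens a0 a3
  refine ⟨![c • e 0 + s • e 3, e 1, e 2, -s • e 0 + c • e 3, c • e 4 + s • e 6, e 5, -s • e 4 + c • e 6], ?_, (c * a0 + s * a3), (c * a4 + s * a6), a5, (-s * a4 + c * a6), ?_⟩
  · have := rot03 (fun i => ExteriorAlgebra.ι ℝ (e i)) (fun i j => iota_sw e i j)
      (fun i => ExteriorAlgebra.ι_sq_zero _) c s hcs
    unfold SameFr
    convert this using 3 <;>
    · funext i
      fin_cases i <;> simp
  · have h1 : (-s * a0 + c * a3) = 0 := by linear_combination h0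
    have h2 : Co ![c • e 0 + s • e 3, e 1, e 2, -s • e 0 + c • e 3, c • e 4 + s • e 6, e 5, -s • e 4 + c • e 6] α (c * a0 + s * a3) 0 0 (-s * a0 + c * a3) (c * a4 + s * a6) a5 (-s * a4 + c * a6) := by
      unfold Co at h ⊢
      rw [h]
      simp only [Fin.isValue, Matrix.cons_val]
      match_scalars <;> first | ring1 | linear_combination a0 * hcs | linear_combination -a0 * hcs | linear_combination a3 * hcs | linear_combination -a3 * hcs | linear_combination a4 * hcs | linear_combination -a4 * hcs | linear_combination a6 * hcs | linear_combination -a6 * hcs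
    rw [h1] at h2
    simpa only [mul_zero, add_zero, zero_add] using h2

theorem step23 {M : Type*} [AddCommGroup M] [Module ℝ M] (e : Fin 7 → M) (α : M)
    (a0 a4 a5 a6 : ℝ) (h : Co e α a0 0 0 0 a4 a5 a6) :
    ∃ f, SameFr e f ∧ ∃ a0' a4' a6', Co f α a0' 0 0 0 a4' 0 a6' := by
  obtain ⟨c, s, hcs, h0⟩ := givens a4 (-a5)
  refine ⟨![e 0, e 1, c • e 2 + s • e 3, -s • e 2 + c • e 3, c • e 4 + -s • e 5, s • e 4 + c • e 5, e 6], ?_, a0, (c * a4 + -s * a5), a6, ?_⟩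
  · have := rot23 (fun i => ExteriorAlgebra.ι ℝ (e i)) (fun i j => iota_sw e i j)
      (fun i => ExteriorAlgebra.ι_sq_zero _) c s hcs
    unfold SameFr
    convert this using 3 <;>
    · funext i
      fin_cases i <;> simp
  · have h1 : (s * a4 + c * a5) = 0 := by linear_combination -h0
    have h2 : Co ![e 0, e 1, c • e 2 + s • e 3, -s • e 2 + c • e 3, c • e 4 + -s • e 5, s • e 4 + c • e 5, e 6] α a0 0 (c * 0 + s * 0) (-s * 0 + c * 0) (c * a4 + -s * a5) (s * a4 + c * a5) a6 := by
      unfold Co at h ⊢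
      rw [h]
      simp only [Fin.isValue, Matrix.cons_val]
      match_scalars <;> first | ring1 | linear_combination a4 * hcs | linear_combination -a4 * hcs | linear_combination a5 * hcs | linear_combination -a5 * hcs
    rw [h1] at h2
    simpa only [mul_zero, add_zero, zero_add] using h2

theorem step12 {M : Type*} [AddCommGroup M] [Module ℝ M] (e : Fin 7 → M) (α : M)
    (a0 a4 a6 : ℝ) (h : Co e α a0 0 0 0 a4 0 a6) :
    ∃ f, SameFr e f ∧ ∃ a0' a4', Co f α a0' 0 0 0 a4' 0 0 := by
  obtain ⟨c, s, hcs, h0⟩ := givens a4 a6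
  refine ⟨![e 0, c • e 1 + s • e 2, -s • e 1 + c • e 2, e 3, c • e 4 + s • e 6, e 5, -s • e 4 + c • e 6], ?_, a0, (c * a4 + s * a6), ?_⟩
  · have := rot12 (fun i => ExteriorAlgebra.ι ℝ (e i)) (fun i j => iota_sw e i j)
      (fun i => ExteriorAlgebra.ι_sq_zero _) c s hcs
    unfold SameFr
    convert this using 3 <;>
    · funext i
      fin_cases i <;> simp
  · have h1 : (-s * a4 + c * a6) = 0 := by linear_combination h0
    have h2 : Co ![e 0, c • e 1 + s • e 2, -s • e 1 + c • e 2, e 3, c • e 4 + s • e 6, e 5, -s • e 4 + c • e 6] α a0 (c * 0 + s * 0) (-s * 0 + c * 0) 0 (c * a4 + s * a6) 0 (-s * a4 + c * a6) := by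
      unfold Co at h ⊢
      rw [h]
      simp only [Fin.isValue, Matrix.cons_val]
      match_scalars <;> first | ring1 | linear_combination a4 * hcs | linear_combination -a4 * hcs | linear_combination a6 * hcs | linear_combination -a6 * hcs
    rw [h1] at h2
    simpa only [mul_zero, add_zero, zero_add] using h2

theorem frame {M : Type*} [AddCommGroup M] [Module ℝ M] (e : Fin 7 → M) (α : M)
    (a0 a1 a2 a3 a4 a5 a6 : ℝ) (h : Co e α a0 a1 a2 a3 a4 a5 a6) :
    ∃ f, SameFr e f ∧ ∃ r s : ℝ, α = r • f 0 + s • f 4 := by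
  obtain ⟨f1, H1, _, _, _, _, _, _, h⟩ := step01 _ _ _ _ _ _ _ _ _ h
  obtain ⟨f2, H2, _, _, _, _, _, h⟩ := step02 _ _ _ _ _ _ _ _ h
  obtain ⟨f3, H3, _, _, _, _, h⟩ := step03 _ _ _ _ _ _ _ h
  obtain ⟨f4, H4, _, _, _, h⟩ := step23 _ _ _ _ _ _ h
  obtain ⟨f5, H5, r, s, h⟩ := step12 _ _ _ _ _ h
  refine ⟨f5, ⟨?_, ?_⟩, r, s, ?_⟩
  · rw [H5.1, H4.1, H3.1, H2.1, H1.1]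
  · rw [H5.2, H4.2, H3.2, H2.2, H1.2]
  · simpa [Co] using h

end Frame


section Alg

open CliffordAlgebra in
theorem ctr_leib {V : Type*} [AddCommGroup V] [Module ℝ V] (β : Module.Dual ℝ V)
    (a b : ExteriorAlgebra ℝ V) :
    ctr1 β (a * b) = ctr1 β a * b + involute (Q := (0 : QuadraticForm ℝ V)) a * ctr1 β b := by
  unfold ctr1
  induction a using CliffordAlgebra.left_induction with
  | algebraMap r => rw [contractLeft_algebraMap_mul, contractLeft_algebraMap]; simp
  | add x y hx hy => simp only [add_mul, map_add, hx, hy]; abel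
  | ι_mul x m hx =>
    rw [mul_assoc, contractLeft_ι_mul, hx, contractLeft_ι_mul, map_mul, involute_ι]
    simp only [mul_add, sub_mul, mul_assoc, smul_mul_assoc, neg_mul]
    abel

open CliffordAlgebra in
theorem inv_ctr {V : Type*} [AddCommGroup V] [Module ℝ V] (β : Module.Dual ℝ V)
    (a : ExteriorAlgebra ℝ V) :
    involute (Q := (0 : QuadraticForm ℝ V)) (ctr1 β a) =
      - ctr1 β (involute (Q := (0 : QuadraticForm ℝ V)) a) := by
  unfold ctr1
  induction a using CliffordAlgebra.left_induction with
  | algebraMap r => simp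
  | add x y hx hy => simp only [map_add, hx, hy]; abel
  | ι_mul x m hx =>
    rw [contractLeft_ι_mul, map_sub, map_mul, map_mul, involute_ι, hx, ← map_neg (ι (0 : QuadraticForm ℝ V)),
      contractLeft_ι_mul, map_smul]
    simp
    abel

open CliffordAlgebra in
theorem mul_iota {V : Type*} [AddCommGroup V] [Module ℝ V] (a : ExteriorAlgebra ℝ V) (v : V) :
    a * ExteriorAlgebra.ι ℝ v =
      ExteriorAlgebra.ι ℝ v * involute (Q := (0 : QuadraticForm ℝ V)) a := by
  induction a using CliffordAlgebra.left_induction with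
  | algebraMap r => rw [AlgHom.commutes]; exact Algebra.commutes _ _
  | add x y hx hy => simp only [map_add, add_mul, mul_add, hx, hy]
  | ι_mul x m hx =>
    rw [mul_assoc, hx, map_mul, involute_ι, ← mul_assoc, neg_mul, mul_neg, ← mul_assoc,
      ← neg_mul]
    congr 1
    exact eq_neg_of_add_eq_zero_left (ExteriorAlgebra.ι_add_mul_swap _ _)

open CliffordAlgebra in
theorem even_comm {V : Type*} [AddCommGroup V] [Module ℝ V] (a : ExteriorAlgebra ℝ V)
    (ha : involute (Q := (0 : QuadraticForm ℝ V)) a = a) (b : ExteriorAlgebra ℝ V) :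
    a * b = b * a := by
  induction b using CliffordAlgebra.left_induction with
  | algebraMap r => exact (Algebra.commutes _ _).symm
  | add x y hx hy => simp only [add_mul, mul_add, hx, hy]
  | ι_mul x m hx =>
    have := mul_iota a m
    rw [ha] at this
    change _ * (ExteriorAlgebra.ι ℝ m * x) = (ExteriorAlgebra.ι ℝ m * x) * _
    rw [← mul_assoc, this, mul_assoc, hx, mul_assoc]

theorem ctr_anti {V : Type*} [AddCommGroup V] [Module ℝ V] (β γ : Module.Dual ℝ V)
    (a : ExteriorAlgebra ℝ V) : ctr1 β (ctr1 γ a) = - ctr1 γ (ctr1 β a) :=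
  CliffordAlgebra.contractLeft_comm _ _ _

theorem ctr_ctr {V : Type*} [AddCommGroup V] [Module ℝ V] (β : Module.Dual ℝ V)
    (a : ExteriorAlgebra ℝ V) : ctr1 β (ctr1 β a) = 0 :=
  CliffordAlgebra.contractLeft_contractLeft _ _

theorem ctr_keep {V : Type*} [AddCommGroup V] [Module ℝ V] (β γ : Module.Dual ℝ V)
    (a : ExteriorAlgebra ℝ V) (h : ctr1 β a = 0) : ctr1 β (ctr1 γ a) = 0 := by
  rw [ctr_anti, h]; simp [ctr1]

theorem ctr_kill {V : Type*} [AddCommGroup V] [Module ℝ V] (β : Module.Dual ℝ V)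
    (a η : ExteriorAlgebra ℝ V) (h : a * η = 0) (hη : ctr1 β η = 0) : ctr1 β a * η = 0 := by
  have := ctr_leib β a η
  rw [h, hη] at this
  simpa [ctr1] using this.symm

theorem ctr_deg {V : Type*} [AddCommGroup V] [Module ℝ V] (β : Module.Dual ℝ V) (n : ℕ)
    (a : ExteriorAlgebra ℝ V) (h : memPow ⊤ (n + 1) a) : memPow ⊤ n (ctr1 β a) := by
  unfold memPow at *
  induction n generalizing a with
  | zero =>
    rw [zero_add, pow_one] at h
    obtain ⟨v, -, rfl⟩ := h
    rw [pow_zero, Submodule.mem_one]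
    exact ⟨β v, (CliffordAlgebra.contractLeft_ι _ _ _).symm⟩
  | succ n ih =>
    rw [pow_succ'] at h
    refine Submodule.mul_induction_on h ?_ ?_
    · intro x hx y hy
      obtain ⟨v, -, rfl⟩ := hx
      have : ctr1 β (ExteriorAlgebra.ι ℝ v * y) = β v • y - ExteriorAlgebra.ι ℝ v * ctr1 β y :=
        CliffordAlgebra.contractLeft_ι_mul _ _ _
      rw [this]
      refine Submodule.sub_mem _ (Submodule.smul_mem _ _ hy) ?_
      rw [pow_succ']
      exact Submodule.mul_mem_mul ⟨v, trivial, rfl⟩ (ih _ hy)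
    · intro x y hx hy
      have : ctr1 β (x + y) = ctr1 β x + ctr1 β y := map_add _ _ _
      rw [this]
      exact Submodule.add_mem _ hx hy

theorem X_eq {V : Type*} [AddCommGroup V] [Module ℝ V] (b : Basis (Fin 7) ℝ V)
    (X : ExteriorAlgebra ℝ V) (hX : memPow ⊤ 7 X) :
    ∃ t : ℝ, X = t • volA (fun i => ExteriorAlgebra.ι ℝ (b i)) := by
  have hb : volA (fun i => ExteriorAlgebra.ι ℝ (b i)) = ExteriorAlgebra.ιMulti ℝ 7 b := by
    simp [ExteriorAlgebra.ιMulti_apply, volA, List.ofFn_succ]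
    rfl
  rw [hb]
  unfold memPow at hX
  rw [Submodule.map_top] at hX
  change X ∈ ⋀[ℝ]^7 V at hX
  rw [← ExteriorAlgebra.ιMulti_span_fixedDegree] at hX
  have key : ExteriorAlgebra.ιMulti ℝ 7 =
      (LinearMap.toSpanSingleton ℝ _ (ExteriorAlgebra.ιMulti ℝ 7 b)).compAlternatingMap b.det := by
    refine Basis.ext_alternating b fun i h => ?_
    let σ : Equiv.Perm (Fin 7) := Equiv.ofBijective i (Finite.injective_iff_bijective.1 h)
    change ExteriorAlgebra.ιMulti ℝ 7 (b ∘ σ) = LinearMap.toSpanSingleton ℝ _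
      (ExteriorAlgebra.ιMulti ℝ 7 b) (b.det (b ∘ σ))
    rw [AlternatingMap.map_perm, AlternatingMap.map_perm, Basis.det_self]
    rcases Int.units_eq_one_or (Equiv.Perm.sign σ) with h | h <;> simp [h]
  have hle : Submodule.span ℝ (Set.range (ExteriorAlgebra.ιMulti ℝ 7)) ≤
      Submodule.span ℝ {ExteriorAlgebra.ιMulti ℝ 7 b} := by
    rw [Submodule.span_le]
    rintro _ ⟨v, rfl⟩
    exact Submodule.mem_span_singleton.2 ⟨b.det v, (DFunLike.congr_fun key v).symm⟩
  obtain ⟨t, ht⟩ := Submodule.mem_span_singleton.1 (hle hX)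
  exact ⟨t, ht.symm⟩

theorem X_mul {V : Type*} [AddCommGroup V] [Module ℝ V] (b : Basis (Fin 7) ℝ V)
    (X : ExteriorAlgebra ℝ V) (hX : memPow ⊤ 7 X) (v : V) : X * ExteriorAlgebra.ι ℝ v = 0 := by
  obtain ⟨t, rfl⟩ := X_eq b X hX
  rw [← b.sum_repr v, map_sum, Finset.mul_sum]
  refine Finset.sum_eq_zero fun i _ => ?_
  have sw := fun i j => iota_sw b i j
  have sq : ∀ i, ExteriorAlgebra.ι ℝ (b i) * ExteriorAlgebra.ι ℝ (b i) = 0 :=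
    fun i => ExteriorAlgebra.ι_sq_zero _
  have sw' := ysw' sw
  have sq' := ysq' sq
  rw [map_smul]
  fin_cases i <;> simp [volA, mul_assoc, sw, sq, sw', sq']

open CliffordAlgebra in
theorem X_inv {V : Type*} [AddCommGroup V] [Module ℝ V] (b : Basis (Fin 7) ℝ V)
    (X : ExteriorAlgebra ℝ V) (hX : memPow ⊤ 7 X) :
    involute (Q := (0 : QuadraticForm ℝ V)) X = -X := by
  obtain ⟨t, rfl⟩ := X_eq b X hX
  have : ∀ v : V, involute (Q := (0 : QuadraticForm ℝ V)) (ExteriorAlgebra.ι ℝ v) =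
    -ExteriorAlgebra.ι ℝ v := fun v => involute_ι v
  simp [volA, this]

theorem X_mul2 {V : Type*} [AddCommGroup V] [Module ℝ V] (b : Basis (Fin 7) ℝ V)
    (X : ExteriorAlgebra ℝ V) (hX : memPow ⊤ 7 X) (η : ExteriorAlgebra ℝ V) (hη : memPow ⊤ 2 η) :
    X * η = 0 := by
  unfold memPow at hη
  rw [pow_two] at hη
  refine Submodule.mul_induction_on hη ?_ ?_
  · rintro _ ⟨v, -, rfl⟩ y -
    rw [← mul_assoc, X_mul b X hX, zero_mul]
  · intro x y hx hy
    rw [mul_add, hx, hy, add_zero]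

theorem eta_sq {V : Type*} [AddCommGroup V] [Module ℝ V] (b : Basis (Fin 7) ℝ V)
    (X : ExteriorAlgebra ℝ V) (hX : memPow ⊤ 7 X) (u1 u2 u3 u4 u5 : Module.Dual ℝ V)
    (η : ExteriorAlgebra ℝ V) (h : η = ctr1 u5 (ctr1 u4 (ctr1 u3 (ctr1 u2 (ctr1 u1 X))))) :
    η * η = 0 := by
  have hd : memPow ⊤ 2 η := by
    rw [h]
    exact ctr_deg _ _ _ (ctr_deg _ _ _ (ctr_deg _ _ _ (ctr_deg _ _ _ (ctr_deg _ _ _ hX))))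
  have h5 : ctr1 u5 η = 0 := by rw [h]; exact ctr_ctr _ _
  have h4 : ctr1 u4 η = 0 := by rw [h]; exact ctr_keep _ _ _ (ctr_ctr _ _)
  have h3 : ctr1 u3 η = 0 := by rw [h]; exact ctr_keep _ _ _ (ctr_keep _ _ _ (ctr_ctr _ _))
  have h2 : ctr1 u2 η = 0 := by
    rw [h]; exact ctr_keep _ _ _ (ctr_keep _ _ _ (ctr_keep _ _ _ (ctr_ctr _ _)))
  have h1 : ctr1 u1 η = 0 := by
    rw [h]; exact ctr_keep _ _ _ (ctr_keep _ _ _ (ctr_keep _ _ _ (ctr_keep _ _ _ (ctr_ctr _ _))))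
  have := ctr_kill u5 _ _ (ctr_kill u4 _ _ (ctr_kill u3 _ _ (ctr_kill u2 _ _ (ctr_kill u1 _ _
    (X_mul2 b X hX η hd) h1) h2) h3) h4) h5
  rwa [← h] at this

theorem ctr_X_ne {V : Type*} [AddCommGroup V] [Module ℝ V] (b : Basis (Fin 7) ℝ V)
    (X : ExteriorAlgebra ℝ V) (hX : memPow ⊤ 7 X) (hX0 : X ≠ 0) (α : Module.Dual ℝ V)
    (hα : α ≠ 0) : ctr1 α X ≠ 0 := by
  intro h
  apply hα
  ext v
  have h1 := ctr_leib α X (ExteriorAlgebra.ι ℝ v)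
  have h2 : ctr1 α (ExteriorAlgebra.ι ℝ v) = algebraMap ℝ _ (α v) :=
    CliffordAlgebra.contractLeft_ι _ _ _
  rw [X_mul b X hX, h, X_inv b X hX, h2, zero_mul, zero_add, neg_mul, ← Algebra.commutes,
    ← Algebra.smul_def] at h1
  have h3 : ctr1 α (0 : ExteriorAlgebra ℝ V) = 0 := map_zero _
  rw [h3] at h1
  have := neg_eq_zero.1 h1.symm
  simpa using (smul_eq_zero.1 this).resolve_right hX0

end Alg


section Comp

theorem ctr_mul {V : Type*} [AddCommGroup V] [Module ℝ V] (β : Module.Dual ℝ V) (v : V)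
    (w : ExteriorAlgebra ℝ V) : ctr1 β (ExteriorAlgebra.ι ℝ v * w) =
      β v • w - ExteriorAlgebra.ι ℝ v * ctr1 β w := CliffordAlgebra.contractLeft_ι_mul _ _ _

theorem ctr_iota {V : Type*} [AddCommGroup V] [Module ℝ V] (β : Module.Dual ℝ V) (v : V) :
    ctr1 β (ExteriorAlgebra.ι ℝ v) = algebraMap ℝ _ (β v) := CliffordAlgebra.contractLeft_ι _ _ _

theorem ctr_one {V : Type*} [AddCommGroup V] [Module ℝ V] (β : Module.Dual ℝ V) :
    ctr1 β 1 = 0 := CliffordAlgebra.contractLeft_one _ _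

theorem ctr_add {V : Type*} [AddCommGroup V] [Module ℝ V] (β : Module.Dual ℝ V)
    (a b : ExteriorAlgebra ℝ V) : ctr1 β (a + b) = ctr1 β a + ctr1 β b := map_add _ _ _

theorem ctr_sub {V : Type*} [AddCommGroup V] [Module ℝ V] (β : Module.Dual ℝ V)
    (a b : ExteriorAlgebra ℝ V) : ctr1 β (a - b) = ctr1 β a - ctr1 β b := map_sub _ _ _

theorem ctr_neg {V : Type*} [AddCommGroup V] [Module ℝ V] (β : Module.Dual ℝ V)
    (a : ExteriorAlgebra ℝ V) : ctr1 β (-a) = - ctr1 β a := map_neg _ _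

theorem ctr_zero {V : Type*} [AddCommGroup V] [Module ℝ V] (β : Module.Dual ℝ V) :
    ctr1 β 0 = 0 := map_zero _

theorem ctr_smul {V : Type*} [AddCommGroup V] [Module ℝ V] (β : Module.Dual ℝ V) (t : ℝ)
    (a : ExteriorAlgebra ℝ V) : ctr1 β (t • a) = t • ctr1 β a := map_smul _ _ _

theorem ctr_lin {V : Type*} [AddCommGroup V] [Module ℝ V] (β γ : Module.Dual ℝ V) (r s : ℝ)
    (a : ExteriorAlgebra ℝ V) :
    ctr1 (r • β + s • γ) a = r • ctr1 β a + s • ctr1 γ a := by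
  simp [ctr1]

def ZA {A : Type*} [Ring A] (y : Fin 7 → A) : A :=
  y 4 * (y 5 * y 6) - y 2 * (y 3 * y 6) - y 0 * (y 1 * y 6) + y 0 * (y 2 * y 4)
    - y 0 * (y 3 * y 5) - y 1 * (y 2 * y 5) - y 1 * (y 3 * y 4)

def w0A {A : Type*} [Ring A] (y : Fin 7 → A) : A := y 2 * y 4 - y 1 * y 6 - y 3 * y 5
def w4A {A : Type*} [Ring A] (y : Fin 7 → A) : A := y 5 * y 6 + y 0 * y 2 - y 1 * y 3

theorem gA {A : Type*} [Ring A] [Algebra ℝ A] (y : Fin 7 → A)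
    (sw : ∀ i j, j < i → y i * y j = -(y j * y i)) (sq : ∀ i, y i * y i = 0) :
    w0A y * w0A y * ZA y = (-6 : ℝ) • volA y ∧ w4A y * w4A y * ZA y = (6 : ℝ) • volA y ∧
    w0A y * w4A y * ZA y = 0 ∧ w4A y * w0A y * ZA y = 0 := by
  have sw' := ysw' sw
  have sq' := ysq' sq
  refine ⟨?_, ?_, ?_, ?_⟩
  all_goals
    simp only [w0A, w4A, ZA, volA]
    simp [mul_add, add_mul, mul_sub, sub_mul, mul_assoc, sw, sq, sw', sq']
  all_goals module

theorem Z_eq {V : Type*} [AddCommGroup V] [Module ℝ V] [FiniteDimensional ℝ V]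
    (b : Basis (Fin 7) ℝ V) :
    Zctr b.dualBasis (volA (fun i => ExteriorAlgebra.ι ℝ (b i))) =
      ZA (fun i => ExteriorAlgebra.ι ℝ (b i)) := by
  simp [Zctr, ctr4, volA, ZA, ctr_mul, ctr_iota, ctr_one, ctr_zero, ctr_add, ctr_sub, ctr_neg]
  abel

theorem w_eq {V : Type*} [AddCommGroup V] [Module ℝ V] [FiniteDimensional ℝ V]
    (b : Basis (Fin 7) ℝ V) :
    ctr1 (b.dualBasis 0) (ZA (fun i => ExteriorAlgebra.ι ℝ (b i))) =
      w0A (fun i => ExteriorAlgebra.ι ℝ (b i)) ∧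
    ctr1 (b.dualBasis 4) (ZA (fun i => ExteriorAlgebra.ι ℝ (b i))) =
      w4A (fun i => ExteriorAlgebra.ι ℝ (b i)) := by
  constructor <;>
  simp [ZA, w0A, w4A, ctr_mul, ctr_iota, ctr_one, ctr_zero, ctr_add, ctr_sub, ctr_neg] <;> abel

theorem vol_eq {V : Type*} [AddCommGroup V] [Module ℝ V] [FiniteDimensional ℝ V]
    (b : Basis (Fin 7) ℝ V) :
      ctr1 (b.dualBasis 6) (ctr1 (b.dualBasis 5) (ctr1 (b.dualBasis 4)
        (ctr1 (b.dualBasis 3) (ctr1 (b.dualBasis 2) (ctr1 (b.dualBasis 1)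
          (ctr1 (b.dualBasis 0) (volA (fun i => ExteriorAlgebra.ι ℝ (b i))))))))) = 1 := by
  simp [volA, ctr_mul, ctr_iota, ctr_one, ctr_zero, ctr_add, ctr_sub, ctr_neg]

/-- Right action of covectors by contraction. -/
noncomputable def DD {V : Type*} [AddCommGroup V] [Module ℝ V] :
    ExteriorAlgebra ℝ (Module.Dual ℝ V) →ₐ[ℝ] (Module.End ℝ (ExteriorAlgebra ℝ V))ᵐᵒᵖ :=
  ExteriorAlgebra.lift ℝ ⟨(MulOpposite.opLinearEquiv ℝ).toLinearMap ∘ₗ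
    (CliffordAlgebra.contractLeft (Q := (0 : QuadraticForm ℝ V))), fun m => by
      apply MulOpposite.unop_injective
      ext x
      exact CliffordAlgebra.contractLeft_contractLeft _ _⟩

noncomputable def D {V : Type*} [AddCommGroup V] [Module ℝ V]
    (Y : ExteriorAlgebra ℝ (Module.Dual ℝ V)) (X : ExteriorAlgebra ℝ V) : ExteriorAlgebra ℝ V :=
  (DD Y).unop X

theorem D_iota {V : Type*} [AddCommGroup V] [Module ℝ V] (β : Module.Dual ℝ V)
    (X : ExteriorAlgebra ℝ V) : D (ExteriorAlgebra.ι ℝ β) X = ctr1 β X := by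
  unfold D DD
  rw [ExteriorAlgebra.lift_ι_apply]
  rfl

theorem D_mul {V : Type*} [AddCommGroup V] [Module ℝ V] (Y W : ExteriorAlgebra ℝ (Module.Dual ℝ V))
    (X : ExteriorAlgebra ℝ V) : D (Y * W) X = D W (D Y X) := by
  unfold D
  rw [map_mul]; rfl

theorem D_add {V : Type*} [AddCommGroup V] [Module ℝ V] (Y W : ExteriorAlgebra ℝ (Module.Dual ℝ V))
    (X : ExteriorAlgebra ℝ V) : D (Y + W) X = D Y X + D W X := by
  unfold D
  rw [map_add]; rfl

theorem D_sub {V : Type*} [AddCommGroup V] [Module ℝ V] (Y W : ExteriorAlgebra ℝ (Module.Dual ℝ V))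
    (X : ExteriorAlgebra ℝ V) : D (Y - W) X = D Y X - D W X := by
  unfold D
  rw [map_sub]; rfl

theorem D_Psi {V : Type*} [AddCommGroup V] [Module ℝ V] (f : Fin 7 → Module.Dual ℝ V)
    (X : ExteriorAlgebra ℝ V) : D (PsiA (fun i => ExteriorAlgebra.ι ℝ (f i))) X = Zctr f X := by
  simp only [PsiA, D_add, D_sub, D_mul, D_iota, Zctr, ctr4]

theorem D_vol {V : Type*} [AddCommGroup V] [Module ℝ V] (e : Fin 7 → Module.Dual ℝ V)
    (X : ExteriorAlgebra ℝ V) : D (volA (fun i => ExteriorAlgebra.ι ℝ (e i))) X =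
      ctr1 (e 6) (ctr1 (e 5) (ctr1 (e 4) (ctr1 (e 3) (ctr1 (e 2) (ctr1 (e 1)
          (ctr1 (e 0) X)))))) := by
  simp only [volA, D_mul, D_iota]

end Comp


section Last

open CliffordAlgebra in
theorem even5 {V : Type*} [AddCommGroup V] [Module ℝ V] (b : Basis (Fin 7) ℝ V)
    (X : ExteriorAlgebra ℝ V) (hX : memPow ⊤ 7 X) (u1 u2 u3 u4 u5 : Module.Dual ℝ V) :
    involute (Q := (0 : QuadraticForm ℝ V)) (ctr1 u5 (ctr1 u4 (ctr1 u3 (ctr1 u2 (ctr1 u1 X))))) =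
      ctr1 u5 (ctr1 u4 (ctr1 u3 (ctr1 u2 (ctr1 u1 X)))) := by
  simp only [inv_ctr, X_inv b X hX, ctr_neg, neg_neg]

open CliffordAlgebra in
theorem Z_inv {V : Type*} [AddCommGroup V] [Module ℝ V] (b : Basis (Fin 7) ℝ V)
    (X : ExteriorAlgebra ℝ V) (hX : memPow ⊤ 7 X) (e : Fin 7 → Module.Dual ℝ V) :
    involute (Q := (0 : QuadraticForm ℝ V)) (Zctr e X) = - Zctr e X := by
  simp only [Zctr, ctr4, map_add, map_sub, inv_ctr, X_inv b X hX, ctr_neg, neg_neg]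
  abel

open CliffordAlgebra in
theorem w_inv {V : Type*} [AddCommGroup V] [Module ℝ V] (b : Basis (Fin 7) ℝ V)
    (X : ExteriorAlgebra ℝ V) (hX : memPow ⊤ 7 X) (e : Fin 7 → Module.Dual ℝ V)
    (γ : Module.Dual ℝ V) :
    involute (Q := (0 : QuadraticForm ℝ V)) (ctr1 γ (Zctr e X)) = ctr1 γ (Zctr e X) := by
  rw [inv_ctr, Z_inv b X hX, ctr_neg, neg_neg]

theorem D_dec {V : Type*} [AddCommGroup V] [Module ℝ V] (U : Submodule ℝ (Module.Dual ℝ V))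
    (Y : ExteriorAlgebra ℝ (Module.Dual ℝ V)) (h : Dec U 4 Y) (X : ExteriorAlgebra ℝ V) :
    ∃ u1 u2 u3 u4 : Module.Dual ℝ V, D Y X = ctr1 u4 (ctr1 u3 (ctr1 u2 (ctr1 u1 X))) := by
  obtain ⟨v, -, rfl⟩ := h
  refine ⟨v 0, v 1, v 2, v 3, ?_⟩
  have : (List.ofFn fun i => ExteriorAlgebra.ι ℝ (v i)).prod =
      ExteriorAlgebra.ι ℝ (v 0) * ExteriorAlgebra.ι ℝ (v 1) * ExteriorAlgebra.ι ℝ (v 2) *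
      ExteriorAlgebra.ι ℝ (v 3) := by
    simp [mul_assoc]
    try rfl
  rw [this]
  simp only [D_mul, D_iota]

theorem cube_zero {A : Type*} [Ring A] (x y : A) (hx : x * x = 0) (hy : y * y = 0)
    (hxy : x * y = y * x) : (x + y) * (x + y) * (x + y) = 0 := by
  have h1 : (x + y) * (x + y) = 2 * (x * y) := by
    rw [add_mul, mul_add, mul_add, hx, hy, ← hxy]; noncomm_ring
  have a : 2 * (x * y) * x = 0 := by rw [hxy, mul_assoc, mul_assoc, hx]; simp
  have b : 2 * (x * y) * y = 0 := by rw [mul_assoc, mul_assoc, hy]; simp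
  rw [h1, mul_add, a, b, add_zero]

/-- length at most two forces the bivector to have zero cube -/
theorem null_of_le2 {V : Type*} [AddCommGroup V] [Module ℝ V] (b : Basis (Fin 7) ℝ V)
    (X : ExteriorAlgebra ℝ V) (hX : memPow ⊤ 7 X) (hX0 : X ≠ 0) (e : Fin 7 → Module.Dual ℝ V)
    (α : Module.Dual ℝ V) (hα : α ≠ 0) (t : ℝ)
    (hg : (6 * t) • X = ctr1 α (Zctr e X) * ctr1 α (Zctr e X) * Zctr e X)
    (U : Submodule ℝ (Module.Dual ℝ V)) (Ω : ExteriorAlgebra ℝ (Module.Dual ℝ V))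
    (hw : ctr1 α (Zctr e X) = ctr1 α (D Ω X)) (h : LenLE U 4 2 Ω) : t = 0 := by
  obtain ⟨Y, hY, rfl⟩ := h
  rw [Fin.sum_univ_two] at hw
  obtain ⟨u1, u2, u3, u4, hu⟩ := D_dec U _ (hY 0) X
  obtain ⟨v1, v2, v3, v4, hv⟩ := D_dec U _ (hY 1) X
  rw [D_add, ctr_add, hu, hv] at hw
  have hc : ctr1 α (Zctr e X) * ctr1 α (Zctr e X) * ctr1 α (Zctr e X) = 0 := by
    rw [hw]
    apply cube_zero
    · exact eta_sq b X hX u1 u2 u3 u4 α _ rfl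
    · exact eta_sq b X hX v1 v2 v3 v4 α _ rfl
    · exact even_comm _ (even5 b X hX _ _ _ _ _) _
  have h2 := congrArg (ctr1 α) hg
  rw [ctr_leib, ctr_leib, map_mul, w_inv b X hX, ctr_ctr, hc, ctr_smul] at h2
  simp only [zero_mul, mul_zero, add_zero] at h2
  have := (smul_eq_zero.1 h2).resolve_right (ctr_X_ne b X hX hX0 α hα)
  linarith

theorem deg_of_le1 {V : Type*} [AddCommGroup V] [Module ℝ V] (b : Basis (Fin 7) ℝ V)
    (X : ExteriorAlgebra ℝ V) (hX : memPow ⊤ 7 X) (hX0 : X ≠ 0) (e : Fin 7 → Module.Dual ℝ V)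
    (α : Module.Dual ℝ V) (hα : α ≠ 0) (γ : Module.Dual ℝ V) (t : ℝ)
    (hg : (6 * t) • X = ctr1 α (Zctr e X) * ctr1 γ (Zctr e X) * Zctr e X)
    (hw : ctr1 α (Zctr e X) * ctr1 α (Zctr e X) = 0) : t = 0 := by
  have hc := even_comm _ (w_inv b X hX e α)
  have h1 := congrArg (ctr1 γ) hw
  rw [ctr_leib, w_inv b X hX, ctr_zero, ← hc, ← two_mul] at h1
  have h1' : ctr1 α (Zctr e X) * ctr1 γ (ctr1 α (Zctr e X)) = 0 := by
    have h3 : (2 : ℝ) • (ctr1 α (Zctr e X) * ctr1 γ (ctr1 α (Zctr e X))) = 0 := by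
      rw [two_smul, ← two_mul]; exact h1
    exact (smul_eq_zero.1 h3).resolve_left (by norm_num)
  have h2 := congrArg (ctr1 α) hg
  rw [ctr_leib, ctr_leib, map_mul, w_inv b X hX, w_inv b X hX, ctr_ctr, ctr_smul, ctr_anti α γ,
    mul_neg, h1', mul_assoc _ _ (ctr1 α (Zctr e X)), ← hc, ← mul_assoc, hw] at h2
  simp only [zero_mul, neg_zero, add_zero] at h2
  have := (smul_eq_zero.1 h2).resolve_right (ctr_X_ne b X hX hX0 α hα)
  linarith

theorem sq_of_le1 {V : Type*} [AddCommGroup V] [Module ℝ V] (b : Basis (Fin 7) ℝ V)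
    (X : ExteriorAlgebra ℝ V) (hX : memPow ⊤ 7 X)
    (α : Module.Dual ℝ V) (U : Submodule ℝ (Module.Dual ℝ V))
    (Ω : ExteriorAlgebra ℝ (Module.Dual ℝ V)) (j : ℕ) (hj : j < 2) (h : LenLE U 4 j Ω) :
    ctr1 α (D Ω X) * ctr1 α (D Ω X) = 0 := by
  obtain ⟨Y, hY, rfl⟩ := h
  interval_cases j
  · have : D (0 : ExteriorAlgebra ℝ (Module.Dual ℝ V)) X = 0 := by simp [D]
    simp [this, ctr_zero]
  · obtain ⟨u1, u2, u3, u4, hu⟩ := D_dec U _ (hY 0) X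
    rw [Fin.sum_univ_one, hu]
    exact eta_sq b X hX u1 u2 u3 u4 α _ rfl

theorem map_fix {M : Type*} [AddCommGroup M] [Module ℝ M] (U : Submodule ℝ M) (p : M →ₗ[ℝ] M)
    (hp : ∀ u ∈ U, p u = u) (n : ℕ) (Y : ExteriorAlgebra ℝ M) (h : memPow U n Y) :
    ExteriorAlgebra.map p Y = Y := by
  unfold memPow at h
  induction n generalizing Y with
  | zero =>
    rw [pow_zero, Submodule.mem_one] at h
    obtain ⟨t, rfl⟩ := h
    simp
  | succ n ih =>
    rw [pow_succ'] at h
    refine Submodule.mul_induction_on h ?_ ?_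
    · rintro _ ⟨u, hu, rfl⟩ y hy
      rw [map_mul, ih y hy, ExteriorAlgebra.map_apply_ι, hp u hu]
    · intro x y hx hy
      rw [map_add, hx, hy]

theorem Psi_two {A : Type*} [Ring A] [Algebra ℝ A] (y : Fin 7 → A)
    (sw : ∀ i j, j < i → y i * y j = -(y j * y i)) (sq : ∀ i, y i * y i = 0)
    (ε : ℝ) (hε : ε * ε = 1) (h : y 4 = -ε • y 0) :
    PsiA y = y 0 * (y 2 * ((y 1 + ε • y 5) * (-y 3 + ε • y 6))) +
      (-y 1) * (y 3 * (y 5 * y 6)) := by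
  have sw' := ysw' sw
  have sq' := ysq' sq
  unfold PsiA
  simp only [h]
  simp [mul_add, add_mul, mul_assoc, sw, sq, sw', sq', smul_smul, hε]
  try abel

theorem le2_of_null {M : Type*} [AddCommGroup M] [Module ℝ M] (f : Fin 7 → M) (α : M)
    (r ε : ℝ) (hr : r ≠ 0) (hε : ε * ε = 1) (hf : α = r • f 0 + (ε * r) • f 4)
    (U : Submodule ℝ M) (hU : IsCompl (Submodule.span ℝ {α}) U)
    (Ω P : ExteriorAlgebra ℝ M) (hΩ : memPow U 4 Ω)
    (hdec : PsiA (fun i => ExteriorAlgebra.ι ℝ (f i)) = Ω + P * ExteriorAlgebra.ι ℝ α) :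
    LenLE U 4 2 Ω := by
  obtain ⟨p, hpU, hp, hpα⟩ : ∃ p : M →ₗ[ℝ] M, (∀ m, p m ∈ U) ∧ (∀ u ∈ U, p u = u) ∧ p α = 0 := by
    refine ⟨U.subtype ∘ₗ U.projectionOnto _ hU.symm, fun m => Subtype.property _, ?_, ?_⟩
    · intro u hu
      simpa using congrArg Subtype.val (Submodule.projectionOnto_apply_left hU.symm ⟨u, hu⟩)
    · simp [Submodule.mem_span_singleton_self]
  have h1 := congrArg (ExteriorAlgebra.map p) hdec
  rw [map_add, map_mul, map_fix U p hp 4 Ω hΩ, ExteriorAlgebra.map_apply_ι, hpα, map_zero,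
    mul_zero, add_zero] at h1
  have h2 : ExteriorAlgebra.map p (PsiA (fun i => ExteriorAlgebra.ι ℝ (f i))) =
      PsiA (fun i => ExteriorAlgebra.ι ℝ (p (f i))) := by
    simp only [PsiA, map_add, map_sub, map_mul, ExteriorAlgebra.map_apply_ι]
  have h4 : p (f 4) = -ε • p (f 0) := by
    rw [hf, map_add, map_smul, map_smul, mul_comm, mul_smul, ← smul_add] at hpα
    have h5 := (smul_eq_zero.1 hpα).resolve_left hr
    have h6 := congrArg (fun z => ε • z) h5
    simp only [smul_add, smul_smul, hε, one_smul, smul_zero] at h6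
    rw [neg_smul]
    exact eq_neg_of_add_eq_zero_right h6
  rw [h2, Psi_two _ (fun i j => iota_sw (fun i => p (f i)) i j)
    (fun i => ExteriorAlgebra.ι_sq_zero _) ε hε (by rw [h4, map_smul])] at h1
  refine ⟨![ExteriorAlgebra.ι ℝ (p (f 0)) * (ExteriorAlgebra.ι ℝ (p (f 2)) *
    ((ExteriorAlgebra.ι ℝ (p (f 1)) + ε • ExteriorAlgebra.ι ℝ (p (f 5))) *
      (-ExteriorAlgebra.ι ℝ (p (f 3)) + ε • ExteriorAlgebra.ι ℝ (p (f 6))))),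
      (-ExteriorAlgebra.ι ℝ (p (f 1))) * (ExteriorAlgebra.ι ℝ (p (f 3)) *
        (ExteriorAlgebra.ι ℝ (p (f 5)) * ExteriorAlgebra.ι ℝ (p (f 6))))], ?_, ?_⟩
  · intro i
    fin_cases i
    · refine ⟨![p (f 0), p (f 2), p (f 1 + ε • f 5), p (-f 3 + ε • f 6)], ?_, ?_⟩
      · intro i; fin_cases i <;> exact hpU _
      · simp
    · refine ⟨![p (-f 1), p (f 3), p (f 5), p (f 6)], ?_, ?_⟩
      · intro i; fin_cases i <;> exact hpU _
      · simp
  · rw [Fin.sum_univ_two, ← h1]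
    rfl

/-- basis of `V` from a frame of covectors -/
theorem exists_basis {V : Type*} [AddCommGroup V] [Module ℝ V] [FiniteDimensional ℝ V]
    (hV : finrank ℝ V = 7) (f : Fin 7 → Module.Dual ℝ V)
    (h : volA (fun i => ExteriorAlgebra.ι ℝ (f i)) ≠ 0) :
    ∃ b : Basis (Fin 7) ℝ V, ⇑b.dualBasis = f := by
  have hl : LinearIndependent ℝ f := by
    by_contra hn
    apply h
    have := (ExteriorAlgebra.ιMulti ℝ 7).map_linearDependent f hn
    rw [← this]
    simp [ExteriorAlgebra.ιMulti_apply, volA]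
    rfl
  let B := basisOfLinearIndependentOfCardEqFinrank hl
    (by rw [Subspace.dual_finrank_eq, hV]; simp)
  have hB : ⇑B = f := coe_basisOfLinearIndependentOfCardEqFinrank _ _
  refine ⟨B.dualBasis.map (Module.evalEquiv ℝ V).symm, ?_⟩
  rw [← hB]
  funext i
  apply (B.dualBasis.map (Module.evalEquiv ℝ V).symm).ext
  intro j
  rw [Basis.dualBasis_apply_self, Basis.map_apply]
  have : B i ((Module.evalEquiv ℝ V).symm (B.dualBasis j)) = B.dualBasis j (B i) := by
    simp
  rw [this, Basis.dualBasis_apply_self]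
  simp [eq_comm]

end Last

/-- Let `V` be a seven-dimensional real vector space with basis
`e₁,…,e₇` and dual basis `e¹,…,e⁷`, and let
`Ψ := e^{1234}-e^{1256}-e^{3456}-e^{2467}+e^{2357}+e^{1457}+e^{1367} ∈ Λ⁴V*` (the Hodge
dual of a `G₂*`-structure adapted to this basis).  Let `vol := e^{1234567}`, let
`X ∈ Λ⁷V` be the seven-vector with `vol(X) = 1`, set `Z := Ψ ⌟ X ∈ Λ³V`, and define `g`
on `V*` by `6 g(β,γ) X = (β ⌟ Z) ∧ (γ ⌟ Z) ∧ Z`.  Then for every nonzero `α ∈ V*` and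
every complement `U` of `span α` in `V*`, the unique forms `Ω ∈ Λ⁴U`, `ρ ∈ Λ³U` with
`Ψ = Ω + ρ ∧ α` satisfy: `l(Ω) = 2` iff `g(α,α) = 0`. -/
theorem stmt10 {V : Type*} [AddCommGroup V] [Module ℝ V] [FiniteDimensional ℝ V]
    (hV : finrank ℝ V = 7) (b : Basis (Fin 7) ℝ V)
    (X : ExteriorAlgebra ℝ V) (hX7 : memPow (⊤ : Submodule ℝ V) 7 X)
    (hXvol :
      ctr1 (b.dualBasis 6) (ctr1 (b.dualBasis 5) (ctr1 (b.dualBasis 4)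
        (ctr1 (b.dualBasis 3) (ctr1 (b.dualBasis 2) (ctr1 (b.dualBasis 1)
          (ctr1 (b.dualBasis 0) X)))))) = 1)
    (Z : ExteriorAlgebra ℝ V) (hZ : Z = Zctr (⇑b.dualBasis) X)
    (gm : Module.Dual ℝ V → Module.Dual ℝ V → ℝ)
    (hg : ∀ β γ : Module.Dual ℝ V,
      ((6 : ℝ) * gm β γ) • X = ctr1 β Z * ctr1 γ Z * Z)
    (α : Module.Dual ℝ V) (hα : α ≠ 0)
    (U : Submodule ℝ (Module.Dual ℝ V)) (hU : IsCompl (Submodule.span ℝ {α}) U)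
    (Ω P : ExteriorAlgebra ℝ (Module.Dual ℝ V))
    (hΩ : memPow U 4 Ω) (hP : memPow U 3 P)
    (hdec : PsiMinus (⇑b.dualBasis) = Ω + P * ExteriorAlgebra.ι ℝ α) :
    len U 4 Ω = 2 ↔ gm α α = 0 := by
  have hX0 : X ≠ 0 := by
    rintro rfl
    simp only [ctr_zero] at hXvol
    exact zero_ne_one hXvol
  subst hZ
  have hpsi : PsiMinus (⇑b.dualBasis) = PsiA (fun i => ExteriorAlgebra.ι ℝ (b.dualBasis i)) := rfl
  rw [hpsi] at hdec
  have hw : ctr1 α (Zctr (⇑b.dualBasis) X) = ctr1 α (D Ω X) := by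
    rw [← D_Psi, hdec, D_add, D_mul, D_iota, ctr_add, ctr_ctr, add_zero]
  have hco : Co (⇑b.dualBasis) α (b.dualBasis.repr α 0) (b.dualBasis.repr α 1)
      (b.dualBasis.repr α 2) (b.dualBasis.repr α 3) (b.dualBasis.repr α 4)
      (b.dualBasis.repr α 5) (b.dualBasis.repr α 6) := by
    unfold Co
    conv_lhs => rw [← b.dualBasis.sum_repr α]
    rw [Fin.sum_univ_seven]
  obtain ⟨f, ⟨hf1, hf2⟩, r, s, hrs⟩ := frame _ _ _ _ _ _ _ _ _ hco
  have hD1 : D (volA (fun i => ExteriorAlgebra.ι ℝ (f i))) X = 1 := by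
    rw [hf2, D_vol]; exact hXvol
  have hne : volA (fun i => ExteriorAlgebra.ι ℝ (f i)) ≠ 0 := by
    intro h
    rw [h] at hD1
    have : D (0 : ExteriorAlgebra ℝ (Module.Dual ℝ V)) X = 0 := by
      have h2 := D_sub (0 : ExteriorAlgebra ℝ (Module.Dual ℝ V)) 0 X
      rwa [sub_self, sub_self] at h2
    rw [this] at hD1
    exact zero_ne_one hD1
  obtain ⟨b', hb'⟩ := exists_basis hV f hne
  subst hb'
  have hZf : Zctr (⇑b.dualBasis) X = Zctr (⇑b'.dualBasis) X := by
    rw [← D_Psi, ← D_Psi, hf1]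
  have hXv : X = volA (fun i => ExteriorAlgebra.ι ℝ (b' i)) := by
    obtain ⟨t, ht⟩ := X_eq b' X hX7
    rw [D_vol, ht] at hD1
    simp only [ctr_smul] at hD1
    rw [vol_eq, ← Algebra.algebraMap_eq_smul_one] at hD1
    have : t = 1 := by
      have := congrArg ExteriorAlgebra.algebraMapInv hD1
      simpa using this
    rw [ht, this, one_smul]
  have hZ2 : Zctr (⇑b.dualBasis) X = ZA (fun i => ExteriorAlgebra.ι ℝ (b' i)) := by
    rw [hZf, hXv, Z_eq]
  obtain ⟨g00, g44, g04, g40⟩ := gA (fun i => ExteriorAlgebra.ι ℝ (b' i))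
    (fun i j => iota_sw b' i j) (fun i => ExteriorAlgebra.ι_sq_zero _)
  obtain ⟨w0, w4⟩ := w_eq b'
  have key : ∀ p q : ℝ, gm α (p • b'.dualBasis 0 + q • b'.dualBasis 4) = s * q - r * p := by
    intro p q
    have h := hg α (p • b'.dualBasis 0 + q • b'.dualBasis 4)
    rw [hZ2] at h
    nth_rewrite 2 [hrs] at h
    rw [ctr_lin, ctr_lin, w0, w4] at h
    simp only [add_mul, mul_add, smul_mul_assoc, mul_smul_comm, g00, g44, g04, g40, ← hXv,
      smul_smul, smul_zero, add_zero, zero_add, ← add_smul] at h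
    have := smul_left_injective ℝ hX0 h
    linarith
  have hgaa : gm α α = s * s - r * r := by
    have := key r s
    rwa [← hrs] at this
  have hnot : ∀ j < 2, ¬ LenLE U 4 j Ω := by
    intro j hj hL
    have hsq := sq_of_le1 b X hX7 α U Ω j hj hL
    rw [← hw] at hsq
    have h0 := deg_of_le1 b X hX7 hX0 _ α hα _ _ (hg α ((1 : ℝ) • b'.dualBasis 0 + (0 : ℝ) • b'.dualBasis 4)) hsq
    have h4 := deg_of_le1 b X hX7 hX0 _ α hα _ _ (hg α ((0 : ℝ) • b'.dualBasis 0 + (1 : ℝ) • b'.dualBasis 4)) hsq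
    rw [key] at h0 h4
    have hr : r = 0 := by linarith
    have hs : s = 0 := by linarith
    apply hα
    rw [hrs, hr, hs, zero_smul, zero_smul, add_zero]
  constructor
  · intro hl
    have hn : ({l | LenLE U 4 l Ω} : Set ℕ).Nonempty := Nat.nonempty_of_sInf_eq_succ hl
    have h2 : LenLE U 4 2 Ω := by
      have := Nat.sInf_mem hn
      unfold len at hl
      rw [hl] at this
      exact this
    exact null_of_le2 b X hX7 hX0 _ α hα _ (hg α α) U Ω hw h2
  · intro h0
    rw [hgaa] at h0
    have hr : r ≠ 0 := by
      intro hr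
      have hs : s = 0 := by
        have : s * s = 0 := by rw [hr] at h0; linarith
        exact mul_self_eq_zero.1 this
      apply hα
      rw [hrs, hr, hs, zero_smul, zero_smul, add_zero]
    have hss : s = (s / r) * r := by field_simp
    have h2 : LenLE U 4 2 Ω := by
      refine le2_of_null (⇑b'.dualBasis) α r (s / r) hr ?_ ?_ U hU Ω P hΩ ?_
      · field_simp; linarith
      · rw [← hss]; exact hrs
      · rw [hf1]; exact hdec
    unfold len
    apply le_antisymm
    · exact Nat.sInf_le h2
    · by_contra hlt
      exact hnot _ (not_le.1 hlt) (Nat.sInf_mem (s := {l | LenLE U 4 l Ω}) ⟨2, h2⟩)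
end

section
/- Let g be a seven-dimensional real Lie algebra with a six-dimensional abelian ideal u. If g admits a cocalibrated G₂-structure — i.e. there exists a closed four-form Ψ ∈ Λ⁴g* such that for some basis f¹,…,f⁷ of g*, Ψ = f^{1234}+f^{1256}+f^{3456}−f^{2467}+f^{2357}+f^{1457}+f^{1367} — then g also admits a cocalibrated G₂*-structure, i.e. there exists a closed four-form Ψ' ∈ Λ⁴g* such that for some basis h¹,…,h⁷ of g*, Ψ' = h^{1234}−h^{1256}−h^{3456}−h^{2467}+h^{2357}+h^{1457}+h^{1367}. -/
open Module

section AltMachinery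

variable {F : Type*} [Field F] {V : Type*} [AddCommGroup V] [Module F V]

/-- The wedge `φ₁ ∧ … ∧ φ_m` of `m` covectors, as an alternating `m`-form on `V`:
`(φ₁ ∧ … ∧ φ_m)(v₁,…,v_m) = det (φ_i (v_j))`. -/
noncomputable def wedgeCov (m : ℕ) (φ : Fin m → Module.Dual F V) :
    V [⋀^Fin m]→ₗ[F] F :=
  (Matrix.detRowAlternating : (Fin m → F) [⋀^Fin m]→ₗ[F] F).compLinearMap
    (LinearMap.pi φ)

/-- A decomposable alternating `m`-form: a wedge of `m` covectors. -/
def AltDec (m : ℕ) (X : V [⋀^Fin m]→ₗ[F] F) : Prop :=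
  ∃ φ : Fin m → Module.Dual F V, X = wedgeCov m φ

/-- The `m`-form `X` is a sum of `l` decomposable `m`-forms. -/
def AltLenLE (m l : ℕ) (X : V [⋀^Fin m]→ₗ[F] F) : Prop :=
  ∃ Y : Fin l → (V [⋀^Fin m]→ₗ[F] F), (∀ i, AltDec m (Y i)) ∧ X = ∑ i, Y i

/-- The `m`-form `X` has length `l`: it is a sum of `l` decomposable `m`-forms and of no
smaller number of them. -/
def AltHasLen (m l : ℕ) (X : V [⋀^Fin m]→ₗ[F] F) : Prop :=
  AltLenLE m l X ∧ ∀ j < l, ¬ AltLenLE m j X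

end AltMachinery

section CE

variable {F : Type*} [Field F] {g : Type*} [LieRing g] [LieAlgebra F g]

/-- The Chevalley–Eilenberg differential of a `(k+1)`-form (given as a function on tuples):
`(dρ)(x₀,…,x_{k+1}) = ∑_{i<j} (-1)^{i+j} ρ(⁅x_i,x_j⁆, x₀,…,x̂_i,…,x̂_j,…,x_{k+1})`. -/
noncomputable def ceDiff (k : ℕ) (ρ : (Fin (k + 1) → g) → F) : (Fin (k + 2) → g) → F :=
  fun x => ∑ i : Fin (k + 2), ∑ j : Fin (k + 2),
    if h : (i : ℕ) < (j : ℕ) then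
      (-1 : F) ^ ((i : ℕ) + (j : ℕ)) *
        ρ (Fin.cons ⁅x i, x j⁆ fun l : Fin k =>
            x (j.succAbove ((⟨(i : ℕ),
              Nat.lt_of_lt_of_le h (Nat.lt_succ_iff.mp j.isLt)⟩ : Fin (k + 1)).succAbove l)))
    else 0

end CE

section G2Forms

variable {F : Type*} [Field F] {g : Type*} [AddCommGroup g] [Module F g]

/-- The wedge `f^i ∧ f^j ∧ f^k ∧ f^l` of four covectors from the basis `b` of `g*`. -/
noncomputable def bw (b : Basis (Fin 7) F (Module.Dual F g)) (i j k l : Fin 7) :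
    g [⋀^Fin 4]→ₗ[F] F :=
  wedgeCov 4 ![b i, b j, b k, b l]

/-- The four-form `f^{1234}+f^{1256}+f^{3456}-f^{2467}+f^{2357}+f^{1457}+f^{1367}` (the
Hodge dual of a `G₂`- resp. `(G₂)_ℂ`-structure), written with `0`-based indices. -/
noncomputable def stdG2 (b : Basis (Fin 7) F (Module.Dual F g)) : g [⋀^Fin 4]→ₗ[F] F :=
  bw b 0 1 2 3 + bw b 0 1 4 5 + bw b 2 3 4 5 - bw b 1 3 5 6 +
    bw b 1 2 4 6 + bw b 0 3 4 6 + bw b 0 2 5 6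

/-- The four-form `f^{1234}-f^{1256}-f^{3456}-f^{2467}+f^{2357}+f^{1457}+f^{1367}` (the
Hodge dual of a `G₂*`-structure), written with `0`-based indices. -/
noncomputable def stdG2star (b : Basis (Fin 7) F (Module.Dual F g)) :
    g [⋀^Fin 4]→ₗ[F] F :=
  bw b 0 1 2 3 - bw b 0 1 4 5 - bw b 2 3 4 5 - bw b 1 3 5 6 +
    bw b 1 2 4 6 + bw b 0 3 4 6 + bw b 0 2 5 6

/-- Membership in `Λ⁴W ⊆ Λ⁴g*` for a subspace `W ⊆ g*`: the span of the wedges of four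
covectors from `W`. -/
def mem4Pow (W : Submodule F (Module.Dual F g)) (Ω : g [⋀^Fin 4]→ₗ[F] F) : Prop :=
  Ω ∈ Submodule.span F
    {Y : g [⋀^Fin 4]→ₗ[F] F |
      ∃ φ : Fin 4 → Module.Dual F g, (∀ i, φ i ∈ W) ∧ Y = wedgeCov 4 φ}

end G2Forms


/-- explicit value of a wedge of four covectors -/
noncomputable def wp {g : Type*} [AddCommGroup g] [Module ℝ g] (v : Fin 4 → g)
    (p q r s : Module.Dual ℝ g) : ℝ :=
  (p (v 0) * q (v 1) - p (v 1) * q (v 0)) * (r (v 2) * s (v 3) - r (v 3) * s (v 2))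
  - (p (v 0) * q (v 2) - p (v 2) * q (v 0)) * (r (v 1) * s (v 3) - r (v 3) * s (v 1))
  + (p (v 0) * q (v 3) - p (v 3) * q (v 0)) * (r (v 1) * s (v 2) - r (v 2) * s (v 1))
  + (p (v 1) * q (v 2) - p (v 2) * q (v 1)) * (r (v 0) * s (v 3) - r (v 3) * s (v 0))
  - (p (v 1) * q (v 3) - p (v 3) * q (v 1)) * (r (v 0) * s (v 2) - r (v 2) * s (v 0))
  + (p (v 2) * q (v 3) - p (v 3) * q (v 2)) * (r (v 0) * s (v 1) - r (v 1) * s (v 0))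

section
variable {g : Type*} [AddCommGroup g] [Module ℝ g]

lemma wedge_eq (v : Fin 4 → g) (p q r s : Module.Dual ℝ g) :
    wedgeCov 4 ![p, q, r, s] v = wp v p q r s := by
  have : wedgeCov 4 ![p, q, r, s] v
      = Matrix.det (Matrix.of fun j i => (![p, q, r, s] : Fin 4 → Module.Dual ℝ g) i (v j)) := rfl
  rw [this]
  simp [Matrix.det_succ_row_zero, Fin.sum_univ_succ, wp, Fin.succAbove]
  ring

noncomputable def SS (v : Fin 4 → g) (f1 f2 f3 f4 f5 f6 f7 : Module.Dual ℝ g) : ℝ :=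
  wp v f1 f2 f3 f4 + wp v f1 f2 f5 f6 + wp v f3 f4 f5 f6 - wp v f2 f4 f6 f7 +
    wp v f2 f3 f5 f7 + wp v f1 f4 f5 f7 + wp v f1 f3 f6 f7

def QQ (Ψ : g [⋀^Fin 4]→ₗ[ℝ] ℝ) (α : Module.Dual ℝ g) (a1 a2 a3 a4 a5 a6 a7 : ℝ) : Prop :=
  ∃ f1 f2 f3 f4 f5 f6 f7 : Module.Dual ℝ g, (∀ v, Ψ v = SS v f1 f2 f3 f4 f5 f6 f7) ∧
    (∀ W : Submodule ℝ (Module.Dual ℝ g), f1 ∈ W → f2 ∈ W → f3 ∈ W → f4 ∈ W → f5 ∈ W →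
      f6 ∈ W → f7 ∈ W → W = ⊤) ∧
    α = a1 • f1 + a2 • f2 + a3 • f3 + a4 • f4 + a5 • f5 + a6 • f6 + a7 • f7

lemma mem_auxP {c s : ℝ} (h : c ^ 2 + s ^ 2 = 1) (W : Submodule ℝ (Module.Dual ℝ g))
    {x y : Module.Dual ℝ g} (h1 : c • x + s • y ∈ W) (h2 : c • y - s • x ∈ W) :
    x ∈ W ∧ y ∈ W := by
  have e1 : x = c • (c • x + s • y) - s • (c • y - s • x) := by
    match_scalars <;> first | ring1 | linear_combination -h
  have e2 : y = s • (c • x + s • y) + c • (c • y - s • x) := by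
    match_scalars <;> first | ring1 | linear_combination -h
  constructor
  · rw [e1]; exact W.sub_mem (W.smul_mem _ h1) (W.smul_mem _ h2)
  · rw [e2]; exact W.add_mem (W.smul_mem _ h1) (W.smul_mem _ h2)

lemma mem_auxM {c s : ℝ} (h : c ^ 2 + s ^ 2 = 1) (W : Submodule ℝ (Module.Dual ℝ g))
    {x y : Module.Dual ℝ g} (h1 : c • x - s • y ∈ W) (h2 : c • y + s • x ∈ W) :
    x ∈ W ∧ y ∈ W := by
  have := mem_auxP h W (x := y) (y := x) h2 h1
  exact ⟨this.2, this.1⟩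


set_option maxRecDepth 10000 in
set_option maxHeartbeats 4000000 in
lemma rot_12_34 {Ψ : g [⋀^Fin 4]→ₗ[ℝ] ℝ} {α : Module.Dual ℝ g}
    {a1 a2 a3 a4 a5 a6 a7 c s : ℝ}
    (h : c ^ 2 + s ^ 2 = 1) (H : QQ Ψ α a1 a2 a3 a4 a5 a6 a7) :
    QQ Ψ α (c * a1 + s * a2) (c * a2 - s * a1) (c * a3 - s * a4) (c * a4 + s * a3) a5 a6 a7 := by
  obtain ⟨f1, f2, f3, f4, f5, f6, f7, hΨ, hs, hα⟩ := H
  refine ⟨c • f1 + s • f2, c • f2 - s • f1, c • f3 - s • f4, c • f4 + s • f3, f5, f6, f7, ?_, ?_, ?_⟩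
  · intro v
    rw [hΨ v]
    linear_combination (norm := skip) -((c^2+s^2+1) * wp v f1 f2 f3 f4 + wp v f1 f2 f5 f6 + wp v f3 f4 f5 f6 - wp v f2 f4 f6 f7 + wp v f2 f3 f5 f7 + wp v f1 f4 f5 f7 + wp v f1 f3 f6 f7) * h
    simp only [SS, wp, LinearMap.add_apply, LinearMap.sub_apply, LinearMap.smul_apply, smul_eq_mul]
    ring1
  · intro W k1 k2 k3 k4 k5 k6 k7
    obtain ⟨m1, m2⟩ := mem_auxP h W k1 k2
    obtain ⟨m3, m4⟩ := mem_auxM h W k3 k4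
    exact hs W m1 m2 m3 m4 k5 k6 k7
  · rw [hα]
    match_scalars <;> first | ring1 | linear_combination (-a1) * h | linear_combination (-a2) * h | linear_combination (-a3) * h | linear_combination (-a4) * h

set_option maxRecDepth 10000 in
set_option maxHeartbeats 4000000 in
lemma rot_34_56 {Ψ : g [⋀^Fin 4]→ₗ[ℝ] ℝ} {α : Module.Dual ℝ g}
    {a1 a2 a3 a4 a5 a6 a7 c s : ℝ}
    (h : c ^ 2 + s ^ 2 = 1) (H : QQ Ψ α a1 a2 a3 a4 a5 a6 a7) :
    QQ Ψ α a1 a2 (c * a3 + s * a4) (c * a4 - s * a3) (c * a5 - s * a6) (c * a6 + s * a5) a7 := by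
  obtain ⟨f1, f2, f3, f4, f5, f6, f7, hΨ, hs, hα⟩ := H
  refine ⟨f1, f2, c • f3 + s • f4, c • f4 - s • f3, c • f5 - s • f6, c • f6 + s • f5, f7, ?_, ?_, ?_⟩
  · intro v
    rw [hΨ v]
    linear_combination (norm := skip) -(wp v f1 f2 f3 f4 + wp v f1 f2 f5 f6 + (c^2+s^2+1) * wp v f3 f4 f5 f6 - wp v f2 f4 f6 f7 + wp v f2 f3 f5 f7 + wp v f1 f4 f5 f7 + wp v f1 f3 f6 f7) * h
    simp only [SS, wp, LinearMap.add_apply, LinearMap.sub_apply, LinearMap.smul_apply, smul_eq_mul]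
    ring1
  · intro W k1 k2 k3 k4 k5 k6 k7
    obtain ⟨m1, m2⟩ := mem_auxP h W k3 k4
    obtain ⟨m3, m4⟩ := mem_auxM h W k5 k6
    exact hs W k1 k2 m1 m2 m3 m4 k7
  · rw [hα]
    match_scalars <;> first | ring1 | linear_combination (-a3) * h | linear_combination (-a4) * h | linear_combination (-a5) * h | linear_combination (-a6) * h

set_option maxRecDepth 10000 in
set_option maxHeartbeats 4000000 in
lemma rot_17_36 {Ψ : g [⋀^Fin 4]→ₗ[ℝ] ℝ} {α : Module.Dual ℝ g}
    {a1 a2 a3 a4 a5 a6 a7 c s : ℝ}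
    (h : c ^ 2 + s ^ 2 = 1) (H : QQ Ψ α a1 a2 a3 a4 a5 a6 a7) :
    QQ Ψ α (c * a1 + s * a7) a2 (c * a3 - s * a6) a4 a5 (c * a6 + s * a3) (c * a7 - s * a1) := by
  obtain ⟨f1, f2, f3, f4, f5, f6, f7, hΨ, hs, hα⟩ := H
  refine ⟨c • f1 + s • f7, f2, c • f3 - s • f6, f4, f5, c • f6 + s • f3, c • f7 - s • f1, ?_, ?_, ?_⟩
  · intro v
    rw [hΨ v]
    linear_combination (norm := skip) -(wp v f1 f2 f3 f4 + wp v f1 f2 f5 f6 + wp v f3 f4 f5 f6 - wp v f2 f4 f6 f7 + wp v f2 f3 f5 f7 + wp v f1 f4 f5 f7 + (c^2+s^2+1) * wp v f1 f3 f6 f7) * h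
    simp only [SS, wp, LinearMap.add_apply, LinearMap.sub_apply, LinearMap.smul_apply, smul_eq_mul]
    ring1
  · intro W k1 k2 k3 k4 k5 k6 k7
    obtain ⟨m1, m2⟩ := mem_auxP h W k1 k7
    obtain ⟨m3, m4⟩ := mem_auxM h W k3 k6
    exact hs W m1 k2 m3 k4 k5 m4 m2
  · rw [hα]
    match_scalars <;> first | ring1 | linear_combination (-a1) * h | linear_combination (-a7) * h | linear_combination (-a3) * h | linear_combination (-a6) * h

set_option maxRecDepth 10000 in
set_option maxHeartbeats 4000000 in
lemma rot_35_46 {Ψ : g [⋀^Fin 4]→ₗ[ℝ] ℝ} {α : Module.Dual ℝ g}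
    {a1 a2 a3 a4 a5 a6 a7 c s : ℝ}
    (h : c ^ 2 + s ^ 2 = 1) (H : QQ Ψ α a1 a2 a3 a4 a5 a6 a7) :
    QQ Ψ α a1 a2 (c * a3 + s * a5) (c * a4 + s * a6) (c * a5 - s * a3) (c * a6 - s * a4) a7 := by
  obtain ⟨f1, f2, f3, f4, f5, f6, f7, hΨ, hs, hα⟩ := H
  refine ⟨f1, f2, c • f3 + s • f5, c • f4 + s • f6, c • f5 - s • f3, c • f6 - s • f4, f7, ?_, ?_, ?_⟩
  · intro v
    rw [hΨ v]
    linear_combination (norm := skip) -(wp v f1 f2 f3 f4 + wp v f1 f2 f5 f6 + (c^2+s^2+1) * wp v f3 f4 f5 f6 - wp v f2 f4 f6 f7 + wp v f2 f3 f5 f7 + wp v f1 f4 f5 f7 + wp v f1 f3 f6 f7) * h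
    simp only [SS, wp, LinearMap.add_apply, LinearMap.sub_apply, LinearMap.smul_apply, smul_eq_mul]
    ring1
  · intro W k1 k2 k3 k4 k5 k6 k7
    obtain ⟨m1, m2⟩ := mem_auxP h W k3 k5
    obtain ⟨m3, m4⟩ := mem_auxP h W k4 k6
    exact hs W k1 k2 m1 m3 m2 m4 k7
  · rw [hα]
    match_scalars <;> first | ring1 | linear_combination (-a3) * h | linear_combination (-a5) * h | linear_combination (-a4) * h | linear_combination (-a6) * h

set_option maxRecDepth 10000 in
set_option maxHeartbeats 4000000 in
lemma rot_36_45 {Ψ : g [⋀^Fin 4]→ₗ[ℝ] ℝ} {α : Module.Dual ℝ g}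
    {a1 a2 a3 a4 a5 a6 a7 c s : ℝ}
    (h : c ^ 2 + s ^ 2 = 1) (H : QQ Ψ α a1 a2 a3 a4 a5 a6 a7) :
    QQ Ψ α a1 a2 (c * a3 + s * a6) (c * a4 - s * a5) (c * a5 + s * a4) (c * a6 - s * a3) a7 := by
  obtain ⟨f1, f2, f3, f4, f5, f6, f7, hΨ, hs, hα⟩ := H
  refine ⟨f1, f2, c • f3 + s • f6, c • f4 - s • f5, c • f5 + s • f4, c • f6 - s • f3, f7, ?_, ?_, ?_⟩
  · intro v
    rw [hΨ v]
    linear_combination (norm := skip) -(wp v f1 f2 f3 f4 + wp v f1 f2 f5 f6 + (c^2+s^2+1) * wp v f3 f4 f5 f6 - wp v f2 f4 f6 f7 + wp v f2 f3 f5 f7 + wp v f1 f4 f5 f7 + wp v f1 f3 f6 f7) * h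
    simp only [SS, wp, LinearMap.add_apply, LinearMap.sub_apply, LinearMap.smul_apply, smul_eq_mul]
    ring1
  · intro W k1 k2 k3 k4 k5 k6 k7
    obtain ⟨m1, m2⟩ := mem_auxP h W k3 k6
    obtain ⟨m3, m4⟩ := mem_auxM h W k4 k5
    exact hs W k1 k2 m1 m3 m4 m2 k7
  · rw [hα]
    match_scalars <;> first | ring1 | linear_combination (-a3) * h | linear_combination (-a6) * h | linear_combination (-a4) * h | linear_combination (-a5) * h

set_option maxRecDepth 10000 in
set_option maxHeartbeats 4000000 in
lemma rot_37_16 {Ψ : g [⋀^Fin 4]→ₗ[ℝ] ℝ} {α : Module.Dual ℝ g}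
    {a1 a2 a3 a4 a5 a6 a7 c s : ℝ}
    (h : c ^ 2 + s ^ 2 = 1) (H : QQ Ψ α a1 a2 a3 a4 a5 a6 a7) :
    QQ Ψ α (c * a1 + s * a6) a2 (c * a3 + s * a7) a4 a5 (c * a6 - s * a1) (c * a7 - s * a3) := by
  obtain ⟨f1, f2, f3, f4, f5, f6, f7, hΨ, hs, hα⟩ := H
  refine ⟨c • f1 + s • f6, f2, c • f3 + s • f7, f4, f5, c • f6 - s • f1, c • f7 - s • f3, ?_, ?_, ?_⟩
  · intro v
    rw [hΨ v]
    linear_combination (norm := skip) -(wp v f1 f2 f3 f4 + wp v f1 f2 f5 f6 + wp v f3 f4 f5 f6 - wp v f2 f4 f6 f7 + wp v f2 f3 f5 f7 + wp v f1 f4 f5 f7 + (c^2+s^2+1) * wp v f1 f3 f6 f7) * h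
    simp only [SS, wp, LinearMap.add_apply, LinearMap.sub_apply, LinearMap.smul_apply, smul_eq_mul]
    ring1
  · intro W k1 k2 k3 k4 k5 k6 k7
    obtain ⟨m1, m2⟩ := mem_auxP h W k3 k7
    obtain ⟨m3, m4⟩ := mem_auxP h W k1 k6
    exact hs W m3 k2 m1 k4 k5 m4 m2
  · rw [hα]
    match_scalars <;> first | ring1 | linear_combination (-a3) * h | linear_combination (-a7) * h | linear_combination (-a1) * h | linear_combination (-a6) * h

lemma kill_snd (x y : ℝ) : ∃ c s : ℝ, c ^ 2 + s ^ 2 = 1 ∧ c * y - s * x = 0 := by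
  by_cases h : x ^ 2 + y ^ 2 = 0
  · have hx : x = 0 := by nlinarith [sq_nonneg x, sq_nonneg y]
    have hy : y = 0 := by nlinarith [sq_nonneg x, sq_nonneg y]
    exact ⟨1, 0, by norm_num, by rw [hx, hy]; ring⟩
  · have hp : 0 < x ^ 2 + y ^ 2 := lt_of_le_of_ne (by positivity) (Ne.symm h)
    have hr : Real.sqrt (x ^ 2 + y ^ 2) ^ 2 = x ^ 2 + y ^ 2 := Real.sq_sqrt hp.le
    refine ⟨x / Real.sqrt (x ^ 2 + y ^ 2), y / Real.sqrt (x ^ 2 + y ^ 2), ?_, by ring⟩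
    rw [div_pow, div_pow, hr]
    field_simp

lemma kill_fst (x y : ℝ) : ∃ c s : ℝ, c ^ 2 + s ^ 2 = 1 ∧ c * x + s * y = 0 := by
  obtain ⟨c, s, h, k⟩ := kill_snd y x
  exact ⟨c, -s, by rw [neg_sq]; exact h, by linear_combination k⟩

lemma reduce {Ψ : g [⋀^Fin 4]→ₗ[ℝ] ℝ} {α : Module.Dual ℝ g} {a1 a2 a3 a4 a5 a6 a7 : ℝ}
    (H : QQ Ψ α a1 a2 a3 a4 a5 a6 a7) : ∃ t, QQ Ψ α 0 0 0 0 0 0 t := by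
  obtain ⟨b1, b3, b4, H⟩ : ∃ b1 b3 b4, QQ Ψ α b1 0 b3 b4 a5 a6 a7 := by
    obtain ⟨c, s, h, k⟩ := kill_snd a1 a2
    have := rot_12_34 h H
    rw [k] at this
    exact ⟨_, _, _, this⟩
  obtain ⟨b3, b5, b6, H⟩ : ∃ b3 b5 b6, QQ Ψ α b1 0 b3 0 b5 b6 a7 := by
    obtain ⟨c, s, h, k⟩ := kill_snd b3 b4
    have := rot_34_56 h H
    rw [k] at this
    exact ⟨_, _, _, this⟩
  obtain ⟨b3, b6, b7, H⟩ : ∃ b3 b6 b7, QQ Ψ α 0 0 b3 0 b5 b6 b7 := by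
    obtain ⟨c, s, h, k⟩ := kill_fst b1 a7
    have := rot_17_36 h H
    rw [k] at this
    exact ⟨_, _, _, this⟩
  obtain ⟨b3, b4, b6, H⟩ : ∃ b3 b4 b6, QQ Ψ α 0 0 b3 b4 0 b6 b7 := by
    obtain ⟨c, s, h, k⟩ := kill_snd b3 b5
    have := rot_35_46 h H
    rw [k] at this
    exact ⟨_, _, _, this⟩
  obtain ⟨b3, H⟩ : ∃ b3, QQ Ψ α 0 0 b3 0 0 b6 b7 := by
    obtain ⟨c, s, h, k⟩ := kill_fst b4 b3
    have := rot_12_34 h H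
    rw [k] at this
    simp only [mul_zero, add_zero, sub_zero] at this
    exact ⟨_, this⟩
  obtain ⟨b3, H⟩ : ∃ b3, QQ Ψ α 0 0 b3 0 0 0 b7 := by
    obtain ⟨c, s, h, k⟩ := kill_snd b3 b6
    have := rot_36_45 h H
    rw [k] at this
    simp only [mul_zero, add_zero, sub_zero] at this
    exact ⟨_, this⟩
  obtain ⟨c, s, h, k⟩ := kill_fst b3 b7
  have := rot_37_16 h H
  rw [k] at this
  simp only [mul_zero, add_zero, sub_zero] at this
  exact ⟨_, this⟩

end

lemma vec4_expand {g : Type*} [AddCommGroup g] [Module ℝ g] (D : g [⋀^Fin 4]→ₗ[ℝ] ℝ)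
    (α : Module.Dual ℝ g)
    (hD : ∀ a b c d, α a = 0 → α b = 0 → α c = 0 → α d = 0 → D ![a, b, c, d] = 0)
    (e : g) (he : α e = 1) (z x y w : g) (hz : α z = 0) :
    D ![z, x, y, w] = α x * D ![z, e, y, w] - α y * D ![z, e, x, w] + α w * D ![z, e, x, y] := by
  -- multilinearity in each slot
  have ad1 : ∀ a b c p q (t : ℝ), D ![a, p + t • q, b, c] = D ![a, p, b, c] + t * D ![a, q, b, c] := by
    intro a b c p q t
    have u : ∀ r, Function.update ![a, p, b, c] 1 r = ![a, r, b, c] := by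
      intro r; ext i; fin_cases i <;> rfl
    have h1 := D.map_update_add ![a, p, b, c] 1 p (t • q)
    have h2 := D.map_update_smul ![a, p, b, c] 1 t q
    rw [u, u, u] at h1
    rw [u, u] at h2
    rw [h1, h2, smul_eq_mul]
  have ad2 : ∀ a b c p q (t : ℝ), D ![a, b, p + t • q, c] = D ![a, b, p, c] + t * D ![a, b, q, c] := by
    intro a b c p q t
    have u : ∀ r, Function.update ![a, b, p, c] 2 r = ![a, b, r, c] := by
      intro r; ext i; fin_cases i <;> rfl
    have h1 := D.map_update_add ![a, b, p, c] 2 p (t • q)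
    have h2 := D.map_update_smul ![a, b, p, c] 2 t q
    rw [u, u, u] at h1
    rw [u, u] at h2
    rw [h1, h2, smul_eq_mul]
  have ad3 : ∀ a b c p q (t : ℝ), D ![a, b, c, p + t • q] = D ![a, b, c, p] + t * D ![a, b, c, q] := by
    intro a b c p q t
    have u : ∀ r, Function.update ![a, b, c, p] 3 r = ![a, b, c, r] := by
      intro r; ext i; fin_cases i <;> rfl
    have h1 := D.map_update_add ![a, b, c, p] 3 p (t • q)
    have h2 := D.map_update_smul ![a, b, c, p] 3 t q
    rw [u, u, u] at h1
    rw [u, u] at h2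
    rw [h1, h2, smul_eq_mul]
  have al12 : ∀ a b c, D ![a, b, b, c] = 0 := fun a b c =>
    D.map_eq_zero_of_eq _ (i := 1) (j := 2) (by simp) (by decide)
  have al13 : ∀ a b c, D ![a, b, c, b] = 0 := fun a b c =>
    D.map_eq_zero_of_eq _ (i := 1) (j := 3) (by simp) (by decide)
  have al23 : ∀ a b c, D ![a, c, b, b] = 0 := fun a b c =>
    D.map_eq_zero_of_eq _ (i := 2) (j := 3) (by simp) (by decide)
  have sw12 : ∀ a b p c, D ![a, b, p, c] = - D ![a, p, b, c] := by
    intro a b p c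
    have := al12 a (b + (1 : ℝ) • p) c
    rw [ad1, ad2, ad2, al12, al12] at this
    linarith
  have sw23 : ∀ a b p c, D ![a, c, b, p] = - D ![a, c, p, b] := by
    intro a b p c
    have := al23 a (b + (1 : ℝ) • p) c
    rw [ad2, ad3, ad3, al23, al23] at this
    linarith
  have dec : ∀ x, ∃ x', α x' = 0 ∧ x = x' + (α x) • e := fun x =>
    ⟨x - α x • e, by simp [he], by simp⟩
  obtain ⟨x', hx, ex⟩ := dec x
  obtain ⟨y', hy, ey⟩ := dec y
  obtain ⟨w', hw, ew⟩ := dec w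
  generalize α x = tx at *
  generalize α y = ty at *
  generalize α w = tw at *
  subst ex ey ew
  simp only [ad1, ad2, ad3, al12, al13, al23, hD z x' y' w' hz hx hy hw]
  rw [sw12 z x' e w', sw23 z y' e x', sw12 z x' e y']
  ring

noncomputable def ceTerm {g : Type*} [LieRing g] [LieAlgebra ℝ g] (D : g [⋀^Fin 4]→ₗ[ℝ] ℝ)
    (x : Fin 5 → g) (i j : Fin 5) : ℝ :=
  if h : (i : ℕ) < (j : ℕ) then
      (-1 : ℝ) ^ ((i : ℕ) + (j : ℕ)) *
        D (Fin.cons ⁅x i, x j⁆ fun l : Fin 3 =>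
            x (j.succAbove ((⟨(i : ℕ),
              Nat.lt_of_lt_of_le h (Nat.lt_succ_iff.mp j.isLt)⟩ : Fin (3 + 1)).succAbove l)))
    else 0

lemma closed_of_vanish {g : Type*} [LieRing g] [LieAlgebra ℝ g] (D : g [⋀^Fin 4]→ₗ[ℝ] ℝ)
    (α : Module.Dual ℝ g)
    (hD : ∀ a b c d, α a = 0 → α b = 0 → α c = 0 → α d = 0 → D ![a, b, c, d] = 0)
    (e : g) (he : α e = 1) (hab : ∀ x y : g, α x = 0 → α y = 0 → ⁅x, y⁆ = 0)
    (hid : ∀ x y : g, α ⁅x, y⁆ = 0) : ceDiff 3 ⇑D = 0 := by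
  have br : ∀ x y : g, ⁅x, y⁆ = α x • ⁅e, y⁆ - α y • ⁅e, x⁆ := by
    intro x y
    have := hab (x - α x • e) (y - α y • e) (by simp [he]) (by simp [he])
    simp only [sub_lie, lie_sub, smul_lie, lie_smul, lie_self, smul_zero, sub_zero] at this
    rw [← lie_skew x e] at this
    rw [← sub_eq_zero, ← this]
    module
  have lin0 : ∀ a b p q c (t r : ℝ), D ![t • p - r • q, a, b, c]
      = t * D ![p, a, b, c] - r * D ![q, a, b, c] := by
    intro a b p q c t r
    have u : ∀ z, Function.update ![p, a, b, c] 0 z = ![z, a, b, c] := by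
      intro r; ext i; fin_cases i <;> rfl
    have h1 := D.map_update_sub ![p, a, b, c] 0 (t • p) (r • q)
    have h2 := D.map_update_smul ![p, a, b, c] 0 t p
    have h3 := D.map_update_smul ![p, a, b, c] 0 r q
    rw [u, u, u] at h1
    rw [u, u] at h2 h3
    rw [h1, h2, h3, smul_eq_mul, smul_eq_mul]
  funext x
  have cons4 : ∀ (z : g) (f : Fin 3 → g), (Fin.cons z f : Fin 4 → g) = ![z, f 0, f 1, f 2] := by
    intro z f
    ext i; fin_cases i <;> rfl
  have main : ∀ i j k l m, D ![⁅x i, x j⁆, x k, x l, x m] =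
      α (x i) * (α (x k) * D ![⁅e, x j⁆, e, x l, x m] - α (x l) * D ![⁅e, x j⁆, e, x k, x m]
        + α (x m) * D ![⁅e, x j⁆, e, x k, x l])
      - α (x j) * (α (x k) * D ![⁅e, x i⁆, e, x l, x m] - α (x l) * D ![⁅e, x i⁆, e, x k, x m]
        + α (x m) * D ![⁅e, x i⁆, e, x k, x l]) := by
    intro i j k l m
    rw [br, lin0, vec4_expand D α hD e he _ _ _ _ (hid e (x j)),
      vec4_expand D α hD e he _ _ _ _ (hid e (x i))]
  have ex : ceDiff 3 ⇑D x = ∑ i, ∑ j, ceTerm D x i j := rfl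
  have T0 : ∀ i j : Fin 5, ¬ ((i : ℕ) < (j : ℕ)) → ceTerm D x i j = 0 := fun i j h => dif_neg h
  have T01 : ceTerm D x 0 1 = (-1) ^ 1 * D ![⁅x 0, x 1⁆, x 2, x 3, x 4] :=
    (dif_pos (by decide)).trans (by rw [cons4]; rfl)
  have T02 : ceTerm D x 0 2 = (-1) ^ 2 * D ![⁅x 0, x 2⁆, x 1, x 3, x 4] :=
    (dif_pos (by decide)).trans (by rw [cons4]; rfl)
  have T03 : ceTerm D x 0 3 = (-1) ^ 3 * D ![⁅x 0, x 3⁆, x 1, x 2, x 4] :=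
    (dif_pos (by decide)).trans (by rw [cons4]; rfl)
  have T04 : ceTerm D x 0 4 = (-1) ^ 4 * D ![⁅x 0, x 4⁆, x 1, x 2, x 3] :=
    (dif_pos (by decide)).trans (by rw [cons4]; rfl)
  have T12 : ceTerm D x 1 2 = (-1) ^ 3 * D ![⁅x 1, x 2⁆, x 0, x 3, x 4] :=
    (dif_pos (by decide)).trans (by rw [cons4]; rfl)
  have T13 : ceTerm D x 1 3 = (-1) ^ 4 * D ![⁅x 1, x 3⁆, x 0, x 2, x 4] :=
    (dif_pos (by decide)).trans (by rw [cons4]; rfl)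
  have T14 : ceTerm D x 1 4 = (-1) ^ 5 * D ![⁅x 1, x 4⁆, x 0, x 2, x 3] :=
    (dif_pos (by decide)).trans (by rw [cons4]; rfl)
  have T23 : ceTerm D x 2 3 = (-1) ^ 5 * D ![⁅x 2, x 3⁆, x 0, x 1, x 4] :=
    (dif_pos (by decide)).trans (by rw [cons4]; rfl)
  have T24 : ceTerm D x 2 4 = (-1) ^ 6 * D ![⁅x 2, x 4⁆, x 0, x 1, x 3] :=
    (dif_pos (by decide)).trans (by rw [cons4]; rfl)
  have T34 : ceTerm D x 3 4 = (-1) ^ 7 * D ![⁅x 3, x 4⁆, x 0, x 1, x 2] :=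
    (dif_pos (by decide)).trans (by rw [cons4]; rfl)
  rw [ex]
  simp only [Fin.sum_univ_five, T01, T02, T03, T04, T12, T13, T14, T23, T24, T34, main]
  rw [T0 0 0 (by decide), T0 1 0 (by decide), T0 1 1 (by decide), T0 2 0 (by decide), T0 2 1 (by decide), T0 2 2 (by decide), T0 3 0 (by decide), T0 3 1 (by decide), T0 3 2 (by decide), T0 3 3 (by decide), T0 4 0 (by decide), T0 4 1 (by decide), T0 4 2 (by decide), T0 4 3 (by decide), T0 4 4 (by decide)]
  simp only [Pi.zero_apply]
  ring

/-- Let `g` be a seven-dimensional real Lie algebra with a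
six-dimensional abelian ideal `u`.  If `g` admits a cocalibrated `G₂`-structure (a
closed four-form of the standard type `stdG2`), then it also admits a cocalibrated
`G₂*`-structure (a closed four-form of the standard type `stdG2star`). -/
theorem stmt19 {g : Type*} [LieRing g] [LieAlgebra ℝ g] [FiniteDimensional ℝ g]
    (hg : finrank ℝ g = 7)
    (u : LieIdeal ℝ g) (habel : ∀ x ∈ u, ∀ y ∈ u, ⁅x, y⁆ = (0 : g))
    (hu : finrank ℝ ↥u = 6)
    (hG2 : ∃ Ψ : g [⋀^Fin 4]→ₗ[ℝ] ℝ, ceDiff 3 ⇑Ψ = 0 ∧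
      ∃ b : Basis (Fin 7) ℝ (Module.Dual ℝ g), Ψ = stdG2 b) :
    ∃ Ψ' : g [⋀^Fin 4]→ₗ[ℝ] ℝ, ceDiff 3 ⇑Ψ' = 0 ∧
      ∃ b' : Basis (Fin 7) ℝ (Module.Dual ℝ g), Ψ' = stdG2star b' := by
  obtain ⟨Ψ, hΨ, b, hb⟩ := hG2
  have hlt : u.toSubmodule < ⊤ := by
    rw [lt_top_iff_ne_top]
    intro h
    have h1 : finrank ℝ u.toSubmodule = 6 := hu
    rw [h, finrank_top, hg] at h1
    omega
  obtain ⟨α, hα0, hle⟩ := Submodule.exists_le_ker_of_lt_top _ hlt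
  have hker : u.toSubmodule = LinearMap.ker α := by
    apply Submodule.eq_of_le_of_finrank_le hle
    have h1 : finrank ℝ u.toSubmodule = 6 := hu
    have h2 := Module.Dual.finrank_ker_add_one_of_ne_zero hα0
    omega
  have hmem : ∀ x, x ∈ u ↔ α x = 0 := by
    intro x
    rw [← LinearMap.mem_ker, ← hker]; rfl
  have hab : ∀ x y : g, α x = 0 → α y = 0 → ⁅x, y⁆ = 0 := fun x y hx hy =>
    habel x ((hmem x).2 hx) y ((hmem y).2 hy)
  obtain ⟨e, he⟩ : ∃ e, α e = 1 := by
    obtain ⟨x, hx⟩ : ∃ x, α x ≠ 0 := by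
      by_contra! h
      exact hα0 (LinearMap.ext h)
    exact ⟨(α x)⁻¹ • x, by simp [hx]⟩
  have hid : ∀ x y : g, α ⁅x, y⁆ = 0 := by
    have key : ∀ y, α ⁅e, y⁆ = 0 := by
      intro y
      have hy : y - α y • e ∈ u := (hmem _).2 (by simp [he])
      have := (hmem _).1 (lie_mem_right ℝ g u e _ hy)
      simpa using this
    intro x y
    have hx : x - α x • e ∈ u := (hmem _).2 (by simp [he])
    have h1 := (hmem _).1 (lie_mem_left ℝ g u _ y hx)
    simpa [key] using h1
  have H : QQ Ψ α (b.repr α 0) (b.repr α 1) (b.repr α 2) (b.repr α 3) (b.repr α 4)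
      (b.repr α 5) (b.repr α 6) := by
    refine ⟨b 0, b 1, b 2, b 3, b 4, b 5, b 6, ?_, ?_, ?_⟩
    · intro v
      rw [hb]
      simp only [stdG2, bw, AlternatingMap.add_apply, AlternatingMap.sub_apply, wedge_eq, SS]
    · intro W h0 h1 h2 h3 h4 h5 h6
      rw [eq_top_iff, ← b.span_eq, Submodule.span_le]
      rintro _ ⟨i, rfl⟩
      fin_cases i <;> assumption
    · have := (b.sum_repr α).symm
      simpa only [Fin.sum_univ_seven] using this
  obtain ⟨t, f1, f2, f3, f4, f5, f6, f7, hS, hs, hαt⟩ := reduce H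
  simp only [zero_smul, zero_add] at hαt
  have ht : t ≠ 0 := by
    rintro rfl
    exact hα0 (by rw [hαt, zero_smul])
  have hf7 : ∀ x, α x = 0 → f7 x = 0 := by
    intro x hx
    rw [hαt] at hx
    simpa [ht] using hx
  have hcard : Fintype.card (Fin 7) = finrank ℝ (Module.Dual ℝ g) := by
    rw [Subspace.dual_finrank_eq, hg]; rfl
  have hspan : ⊤ ≤ Submodule.span ℝ (Set.range ![f1, f2, f3, f4, f6, f5, f7]) := by
    have hm : ∀ i, ![f1, f2, f3, f4, f6, f5, f7] i ∈
      Submodule.span ℝ (Set.range ![f1, f2, f3, f4, f6, f5, f7]) := fun i =>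
        Submodule.subset_span ⟨i, rfl⟩
    exact (hs _ (hm 0) (hm 1) (hm 2) (hm 3) (hm 5) (hm 4) (hm 6)).ge
  let b' : Basis (Fin 7) ℝ (Module.Dual ℝ g) := basisOfTopLeSpanOfCardEqFinrank _ hspan hcard
  have hb' : ∀ i, b' i = ![f1, f2, f3, f4, f6, f5, f7] i := fun i => by
    simp only [b', coe_basisOfTopLeSpanOfCardEqFinrank]
  refine ⟨stdG2star b', ?_, b', rfl⟩
  have hz : ceDiff 3 ⇑(Ψ - stdG2star b') = 0 := by
    refine closed_of_vanish _ α ?_ e he hab hid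
    intro p q r s hp hq hr hs'
    have e0 : b' 0 = f1 := hb' 0
    have e1 : b' 1 = f2 := hb' 1
    have e2 : b' 2 = f3 := hb' 2
    have e3 : b' 3 = f4 := hb' 3
    have e4 : b' 4 = f6 := hb' 4
    have e5 : b' 5 = f5 := hb' 5
    have e6 : b' 6 = f7 := hb' 6
    rw [AlternatingMap.sub_apply, hS]
    simp only [stdG2star, bw, AlternatingMap.add_apply, AlternatingMap.sub_apply, wedge_eq, SS,
      e0, e1, e2, e3, e4, e5, e6]
    have z0 : f7 (![p, q, r, s] 0) = 0 := hf7 _ hp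
    have z1 : f7 (![p, q, r, s] 1) = 0 := hf7 _ hq
    have z2 : f7 (![p, q, r, s] 2) = 0 := hf7 _ hr
    have z3 : f7 (![p, q, r, s] 3) = 0 := hf7 _ hs'
    simp only [wp, z0, z1, z2, z3]
    ring
  funext x
  have h1 := congrFun hz x
  have h2 := congrFun hΨ x
  have h3 : ceDiff 3 ⇑(Ψ - stdG2star b') x = ceDiff 3 ⇑Ψ x - ceDiff 3 ⇑(stdG2star b') x := by
    simp only [ceDiff, ← Finset.sum_sub_distrib]
    refine Finset.sum_congr rfl fun i _ => Finset.sum_congr rfl fun j _ => ?_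
    split_ifs
    · rw [AlternatingMap.sub_apply]; ring
    · simp
  rw [h1, h2] at h3
  simp only [Pi.zero_apply] at h3 ⊢
  linarith
end
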